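/- Assume the Riemann Hypothesis. There exists an absolute constant C > 0 such that for all X ≥ 1 and all δ with 0 < δ ≤ 1, ∫_{1}^{X} (ψ(x+δx) − ψ(x) − δx)² dx ≤ C·δ·X²·(log(2/δ))². -/

import Mathlib

open Real MeasureTheory

/-- The Chebyshev function `ψ(x) = ∑_{n ≤ x} Λ(n)`. -/
noncomputable def chebyshevPsi (x : ℝ) : ℝ :=
  ∑ n ∈ Finset.range (⌊x⌋₊ + 1), ArithmeticFunction.vonMangoldt n

/-!
Put `x = e^u` and let `k(s) = ((1 + δ)^s - 1) / s`. The Laplace transform of the error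
`ψ((1 + δ)e^u) - ψ(e^u) - δe^u` is essentially `-k(s) ζ′/ζ(s)`. Take a large finite set `S` of
zeros and add back their contributions `k(ρ)(e^{ρu} - e^{(ρ-1)u})` to the error; the result is the
remainder, whose transform has no pole at a zero in `S`.

Under the Riemann hypothesis the transform of the remainder is holomorphic in `Re s > 1/2`. As
Jensen's formula gives `O(log(|t| + 3))` zeros in a disc of bounded radius around `1/2 + it`, on
the line `Re s = 1/2 + η` it is bounded by `w(t) log(|t| + 3)`, where `w(t) = δ / (1 + δ|t|)`,
plus `∑ w(γ) / (1 + (t - γ)²)` over the zeros `1/2 + iγ` in `S`, plus a term which costs `1/η` but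
lives only at heights beyond those of `S`. The bound is uniform in `η` once `S` is large enough in
terms of `η`, so Plancherel's theorem on this line with `η ≍ 1 / log X` controls the remainder in
mean square.

The contributions of the zeros in `S` are estimated directly:
`∫ e^{iav} e^{-2|v|} dv = 4 / (4 + a²)` turns their mean square into a double sum over zeros which
is nearly diagonal.
-/

namespace SaffariVaughan

open Filter Metric
open Complex (I)
open scoped FourierTransform SchwartzMap ContDiff Topology ComplexInnerProductSpace ComplexConjugate

section Plancherel

variable {f g : ℝ → ℂ}

lemma continuous_fourier (hf : Integrable f) : Continuous (𝓕 f) :=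
  VectorFourier.fourierIntegral_continuous Real.continuous_fourierChar
    (by exact continuous_inner) hf

lemma fourier_toLp_ae_eq (hf : Integrable f) (hf₂ : MemLp f 2) :
    (𝓕 (hf₂.toLp f) : Lp ℂ 2 (volume : Measure ℝ)) =ᵐ[volume] 𝓕 f := by
  refine ae_eq_of_integral_contDiff_smul_eq ((Lp.memLp _).locallyIntegrable (by norm_num))
    (continuous_fourier hf).locallyIntegrable fun g hg hgs ↦ ?_
  have hgs' : HasCompactSupport fun x ↦ (g x : ℂ) :=
    hgs.comp_left (g := fun x : ℝ ↦ (x : ℂ)) Complex.ofReal_zero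
  let φ : 𝓢(ℝ, ℂ) := hgs'.toSchwartzMap (Complex.ofRealCLM.contDiff.comp hg)
  have smul_eq (x : ℝ) (z : ℂ) : g x • z = φ x • z := rfl
  have distributional : ∫ x, 𝓕 φ x • (hf₂.toLp f) x =
      ∫ x, φ x • (𝓕 (hf₂.toLp f) : Lp ℂ 2 (volume : Measure ℝ)) x := by
    simpa only [TemperedDistribution.fourier_apply, Lp.toTemperedDistribution_apply] using
      congrArg (fun D ↦ D φ) (Lp.fourier_toTemperedDistribution_eq (hf₂.toLp f))
  have classical : ∫ x, 𝓕 φ x • f x = ∫ x, φ x • 𝓕 f x := by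
    have h := VectorFourier.integral_bilin_fourierIntegral_eq_flip
      (ContinuousLinearMap.mul ℂ ℂ) (L := innerₗ ℝ) (μ := volume) (ν := volume)
      Real.continuous_fourierChar continuous_inner φ.integrable hf
    rwa [flip_innerₗ] at h
  simp only [smul_eq]
  rw [← distributional, ← classical]
  refine integral_congr_ae ?_
  filter_upwards [hf₂.coeFn_toLp] with x hx
  rw [hx]

lemma memLp_two_fourier (hf : Integrable f) (hf₂ : MemLp f 2) : MemLp (𝓕 f) 2 :=
  (memLp_congr_ae (fourier_toLp_ae_eq hf hf₂)).1 (Lp.memLp _)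

lemma integral_conj_fourier_mul_fourier (hf : Integrable f) (hf₂ : MemLp f 2) (hg : Integrable g)
    (hg₂ : MemLp g 2) :
    ∫ x, conj (𝓕 f x) * 𝓕 g x = ∫ x, conj (f x) * g x := by
  have h := Lp.inner_fourier_eq (hf₂.toLp f) (hg₂.toLp g)
  rw [L2.inner_def, L2.inner_def] at h
  convert h using 1 <;> refine integral_congr_ae ?_
  · filter_upwards [fourier_toLp_ae_eq hf hf₂, fourier_toLp_ae_eq hg hg₂] with x hfx hgx
    rw [hfx, hgx, RCLike.inner_apply, mul_comm]
  · filter_upwards [hf₂.coeFn_toLp, hg₂.coeFn_toLp] with x hfx hgx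
    rw [hfx, hgx, RCLike.inner_apply, mul_comm]

lemma memLp_two_of_integrable_of_norm_le {C : ℝ} (hf : Integrable f) (hC : ∀ u, ‖f u‖ ≤ C) :
    MemLp f 2 := by
  rw [memLp_two_iff_integrable_sq_norm hf.aestronglyMeasurable]
  refine (hf.norm.const_mul C).mono' (hf.aestronglyMeasurable.norm.pow 2) (ae_of_all _ fun u ↦ ?_)
  rw [Real.norm_of_nonneg (by positivity), sq]
  exact mul_le_mul_of_nonneg_right (hC u) (norm_nonneg _)

end Plancherel

/-- The two-sided Laplace transform `∫ f(u) e^{-su} du`. -/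
noncomputable def laplace (f : ℝ → ℂ) (s : ℂ) : ℂ := ∫ u : ℝ, f u * Complex.exp (-(s * u))

/-- The exponential tilt `f(u) e^{-σu}`, whose Fourier transform is the Laplace transform of `f`
on the line `Re s = σ`. -/
noncomputable def tilt (σ : ℝ) (f : ℝ → ℂ) (u : ℝ) : ℂ := f u * Real.exp (-(σ * u))

section Laplace

variable {f g : ℝ → ℂ} {σ τ : ℝ}

lemma norm_tilt (σ : ℝ) (f : ℝ → ℂ) (u : ℝ) : ‖tilt σ f u‖ = ‖f u‖ * Real.exp (-(σ * u)) := by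
  rw [tilt, norm_mul, Complex.norm_real, Real.norm_of_nonneg (Real.exp_pos _).le]

lemma measurable_tilt (hf : Measurable f) : Measurable (tilt σ f) := by
  unfold tilt
  fun_prop

lemma fourier_tilt (σ : ℝ) (f : ℝ → ℂ) (x : ℝ) :
    𝓕 (tilt σ f) x = laplace f (σ + (2 * π * x : ℝ) * I) := by
  rw [Real.fourier_eq', laplace]
  refine integral_congr_ae (ae_of_all _ fun u ↦ ?_)
  simp only [tilt, smul_eq_mul, Complex.ofReal_exp]
  rw [mul_left_comm, ← Complex.exp_add]
  congr 2
  simp only [RCLike.inner_apply, conj_trivial]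
  push_cast
  ring

lemma laplace_line_eq_fourier (σ : ℝ) (f : ℝ → ℂ) (t : ℝ) :
    laplace f (σ + t * I) = 𝓕 (tilt σ f) (t / (2 * π)) := by
  rw [fourier_tilt, mul_div_cancel₀ _ two_pi_pos.ne']

lemma memLp_two_laplace_line (hf : Integrable (tilt σ f)) (hf₂ : MemLp (tilt σ f) 2) :
    MemLp (fun t : ℝ ↦ laplace f (σ + t * I)) 2 := by
  have h := memLp_two_fourier hf hf₂
  rw [memLp_two_iff_integrable_sq_norm h.1] at h
  have hcont : Continuous fun t : ℝ ↦ laplace f (σ + t * I) := by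
    simp only [laplace_line_eq_fourier]
    exact (continuous_fourier hf).comp (by fun_prop)
  rw [memLp_two_iff_integrable_sq_norm hcont.aestronglyMeasurable]
  simp only [laplace_line_eq_fourier]
  exact h.comp_div two_pi_pos.ne'

lemma integral_conj_laplace_mul_laplace (hf : Integrable (tilt σ f)) (hf₂ : MemLp (tilt σ f) 2)
    (hg : Integrable (tilt τ g)) (hg₂ : MemLp (tilt τ g) 2) :
    ∫ t : ℝ, conj (laplace f (σ + t * I)) * laplace g (τ + t * I) =
      2 * π * ∫ u, conj (tilt σ f u) * tilt τ g u := by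
  rw [← integral_conj_fourier_mul_fourier hf hf₂ hg hg₂]
  simp only [fourier_tilt]
  rw [Measure.integral_comp_mul_left
    (fun t : ℝ ↦ conj (laplace f (σ + t * I)) * laplace g (τ + t * I)), Complex.real_smul,
    abs_of_pos (by positivity), ← mul_assoc]
  norm_cast
  rw [mul_inv_cancel₀ two_pi_pos.ne', Complex.ofReal_one, one_mul]

lemma integral_norm_laplace_sq (hf : Integrable (tilt σ f)) (hf₂ : MemLp (tilt σ f) 2) :
    ∫ t : ℝ, ‖laplace f (σ + t * I)‖ ^ 2 = 2 * π * ∫ u, ‖tilt σ f u‖ ^ 2 := by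
  have h := integral_conj_laplace_mul_laplace hf hf₂ hf hf₂
  simp only [Complex.conj_mul', ← Complex.ofReal_pow, integral_complex_ofReal] at h
  exact_mod_cast h

variable {R : ℝ}

lemma norm_mul_exp_le_of_support (hR : ∀ u, R < |u| → f u = 0) (s : ℂ) (u : ℝ) :
    ‖f u * Complex.exp (-(s * u))‖ ≤ Real.exp (|s.re| * R) * ‖f u‖ := by
  rcases lt_or_ge R |u| with hu | hu
  · simp [hR u hu]
  · rw [norm_mul, mul_comm, Complex.norm_exp]
    gcongr
    calc (-(s * u)).re = -(s.re * u) := by simp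
      _ ≤ |s.re| * |u| := by rw [← abs_mul]; exact neg_le_abs _
      _ ≤ |s.re| * R := by gcongr

lemma norm_laplace_le_of_support (hf : Integrable f) (hR : ∀ u, R < |u| → f u = 0) (s : ℂ) :
    ‖laplace f s‖ ≤ Real.exp (|s.re| * R) * ∫ u, ‖f u‖ := by
  rw [← integral_const_mul]
  exact norm_integral_le_of_norm_le (hf.norm.const_mul _)
    (ae_of_all _ (norm_mul_exp_le_of_support hR s))

lemma differentiable_laplace_of_support (hf : Integrable f) (hR : ∀ u, R < |u| → f u = 0) :
    Differentiable ℂ (laplace f) := by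
  intro s₀
  have hmeas (g : ℝ → ℂ) (hg : AEStronglyMeasurable g) (s : ℂ) :
      AEStronglyMeasurable fun u : ℝ ↦ g u * Complex.exp (-(s * u)) :=
    hg.mul (by fun_prop : Continuous fun u : ℝ ↦ Complex.exp (-(s * u))).aestronglyMeasurable
  have hf' : AEStronglyMeasurable fun u : ℝ ↦ -(u : ℂ) * f u :=
    (by fun_prop : Continuous fun u : ℝ ↦ -(u : ℂ)).aestronglyMeasurable.mul hf.1
  refine (hasDerivAt_integral_of_dominated_loc_of_deriv_le
    (F := fun s u ↦ f u * Complex.exp (-(s * u)))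
    (F' := fun s u ↦ (-(u : ℂ) * f u) * Complex.exp (-(s * u)))
    (bound := fun u ↦ |R| * (Real.exp ((|s₀.re| + 1) * |R|) * ‖f u‖))
    (ball_mem_nhds s₀ one_pos) (.of_forall (hmeas f hf.1)) ?_ (hmeas _ hf' s₀) ?_
    ((hf.norm.const_mul _).const_mul _) ?_).2.differentiableAt
  · exact (hf.norm.const_mul _).mono' (hmeas f hf.1 s₀)
      (ae_of_all _ (norm_mul_exp_le_of_support hR s₀))
  · refine ae_of_all _ fun u s hs ↦ ?_
    rcases lt_or_ge R |u| with hu | hu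
    · simp [hR u hu]
    have hre : |s.re| ≤ |s₀.re| + 1 := by
      have h := (Complex.abs_re_le_norm (s - s₀)).trans (mem_ball_iff_norm.1 hs).le
      rw [Complex.sub_re] at h
      linarith [abs_sub_abs_le_abs_sub s.re s₀.re]
    rw [mul_assoc, norm_mul, norm_neg, Complex.norm_real, Real.norm_eq_abs]
    refine mul_le_mul (hu.trans (le_abs_self R)) ?_ (norm_nonneg _) (abs_nonneg R)
    refine (norm_mul_exp_le_of_support hR s u).trans ?_
    rw [abs_of_nonneg ((abs_nonneg u).trans hu)]
    gcongr
    exact (abs_nonneg u).trans hu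
  · refine ae_of_all _ fun u s _ ↦ ?_
    have h : HasDerivAt (fun s : ℂ ↦ f u * Complex.exp (-(s * u)))
        (f u * (Complex.exp (-(s * u)) * -(1 * u))) s :=
      ((hasDerivAt_id s).mul_const (u : ℂ)).neg.cexp.const_mul _
    exact h.congr_deriv (by ring)

/-- The reflection `s ↦ conj (L(2σ₀ - conj s))` of the Laplace transform `L` of `f`: it is
holomorphic where `L` is, and equals `conj L` on the line `Re s = σ₀`. -/
noncomputable def reflectedLaplace (σ₀ : ℝ) (f : ℝ → ℂ) (s : ℂ) : ℂ :=
  conj (laplace f (2 * σ₀ - conj s))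

lemma reflectedLaplace_line (σ₀ : ℝ) (f : ℝ → ℂ) (σ t : ℝ) :
    reflectedLaplace σ₀ f (σ + t * I) = conj (laplace f ((2 * σ₀ - σ : ℝ) + t * I)) := by
  simp only [reflectedLaplace, map_add, map_mul, Complex.conj_ofReal, Complex.conj_I]
  push_cast
  ring_nf

lemma reflectedLaplace_line_self (σ₀ : ℝ) (f : ℝ → ℂ) (t : ℝ) :
    reflectedLaplace σ₀ f (σ₀ + t * I) = conj (laplace f (σ₀ + t * I)) := by
  rw [reflectedLaplace_line, two_mul, add_sub_cancel_right]

lemma differentiable_reflectedLaplace_of_support (hf : Integrable f)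
    (hR : ∀ u, R < |u| → f u = 0) (σ₀ : ℝ) : Differentiable ℂ (reflectedLaplace σ₀ f) := by
  intro s
  have h : Differentiable ℂ fun z ↦ laplace f (2 * σ₀ - z) :=
    (differentiable_laplace_of_support hf hR).comp (differentiable_id.const_sub (2 * σ₀ : ℂ))
  have h' := (h (conj s)).conj_conj
  rw [Complex.conj_conj] at h'
  exact h'

lemma norm_reflectedLaplace_le_of_support {σ₀ σ₁ : ℝ} (hf : Integrable f) (hR₀ : 0 ≤ R)
    (hR : ∀ u, R < |u| → f u = 0) {s : ℂ} (hs : s.re ∈ Set.Icc σ₀ σ₁) :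
    ‖reflectedLaplace σ₀ f s‖ ≤ Real.exp ((|σ₀| + (σ₁ - σ₀)) * R) * ∫ u, ‖f u‖ := by
  rw [reflectedLaplace, RCLike.norm_conj]
  refine (norm_laplace_le_of_support hf hR _).trans ?_
  have hre : (2 * σ₀ - conj s : ℂ).re = σ₀ - (s.re - σ₀) := by simp; ring
  rw [hre]
  gcongr
  refine (abs_sub _ _).trans ?_
  rw [abs_of_nonneg (sub_nonneg.2 hs.1)]
  linarith [hs.2]

end Laplace

lemma integral_vertical_line_eq {G : ℂ → ℂ} {a b : ℝ} {B : ℝ → ℝ} (hab : a ≤ b)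
    (hG : ∀ s : ℂ, s.re ∈ Set.Icc a b → DifferentiableAt ℂ G s)
    (hB : Tendsto B (cocompact ℝ) (𝓝 0))
    (hGB : ∀ s : ℂ, s.re ∈ Set.Icc a b → ‖G s‖ ≤ B s.im)
    (ha : Integrable fun t : ℝ ↦ G (a + t * I)) (hb : Integrable fun t : ℝ ↦ G (b + t * I)) :
    ∫ t : ℝ, G (a + t * I) = ∫ t : ℝ, G (b + t * I) := by
  rw [cocompact_eq_atBot_atTop, tendsto_sup] at hB
  have rectangle (T : ℝ) : (∫ x in a..b, G (x + (-T : ℝ) * I)) - (∫ x in a..b, G (x + T * I))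
      + I • (∫ y in (-T)..T, G (b + y * I)) - I • (∫ y in (-T)..T, G (a + y * I)) = 0 := by
    refine Complex.integral_boundary_rect_eq_zero_of_differentiableOn G ⟨a, -T⟩ ⟨b, T⟩ ?_
    intro s hs
    rw [Complex.mem_reProdIm] at hs
    exact (hG s (by simpa only [Set.uIcc_of_le hab] using hs.1)).differentiableWithinAt
  have norm_horizontal_le (y : ℝ) : ‖∫ x in a..b, G (x + y * I)‖ ≤ B y * |b - a| := by
    refine intervalIntegral.norm_integral_le_of_norm_le_const fun x hx ↦ ?_
    rw [Set.uIoc_of_le hab] at hx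
    simpa using hGB (x + y * I) (by simpa using ⟨hx.1.le, hx.2⟩)
  have top : Tendsto (fun T : ℝ ↦ ∫ x in a..b, G (x + T * I)) atTop (𝓝 0) :=
    squeeze_zero_norm norm_horizontal_le (by simpa using hB.2.mul_const |b - a|)
  have bottom : Tendsto (fun T : ℝ ↦ ∫ x in a..b, G (x + (-T : ℝ) * I)) atTop (𝓝 0) :=
    squeeze_zero_norm (fun T ↦ norm_horizontal_le (-T))
      (by simpa using (hB.1.comp tendsto_neg_atTop_atBot).mul_const |b - a|)
  have right := intervalIntegral_tendsto_integral hb tendsto_neg_atTop_atBot tendsto_id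
  have left := intervalIntegral_tendsto_integral ha tendsto_neg_atTop_atBot tendsto_id
  have h := tendsto_nhds_unique
    ((((bottom.sub top).add (right.const_smul I)).sub (left.const_smul I)).congr rectangle)
    tendsto_const_nhds
  simp only [sub_zero, zero_add, smul_eq_mul, ← mul_sub, mul_eq_zero, Complex.I_ne_zero,
    false_or] at h
  exact (sub_eq_zero.1 h).symm

section PaleyWiener

variable {q : ℝ → ℂ} {C c σ : ℝ}

lemma integrable_tilt (hqm : Measurable q) (hq₀ : ∀ u < 0, q u = 0)
    (hq : ∀ u, 0 ≤ u → ‖q u‖ ≤ C * Real.exp (c * u)) (hσ : c < σ) : Integrable (tilt σ q) := by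
  have hdom : IntegrableOn (fun u ↦ C * Real.exp ((c - σ) * u)) (Set.Ici 0) := by
    rw [integrableOn_Ici_iff_integrableOn_Ioi]
    exact (integrableOn_exp_mul_Ioi (by linarith) 0).const_mul C
  refine (hdom.integrable_indicator measurableSet_Ici).mono'
    (measurable_tilt hqm).aestronglyMeasurable (ae_of_all _ fun u ↦ ?_)
  rcases lt_or_ge u 0 with hu | hu
  · simp [norm_tilt, hq₀ u hu, hu]
  · rw [Set.indicator_of_mem (Set.mem_Ici.2 hu), norm_tilt, sub_mul, sub_eq_add_neg, Real.exp_add,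
      ← mul_assoc]
    gcongr
    exact hq u hu

lemma norm_tilt_le (hq₀ : ∀ u < 0, q u = 0)
    (hq : ∀ u, 0 ≤ u → ‖q u‖ ≤ C * Real.exp (c * u)) (hσ : c ≤ σ) (u : ℝ) : ‖tilt σ q u‖ ≤ C := by
  have hC : 0 ≤ C := by simpa using (norm_nonneg _).trans (hq 0 le_rfl)
  rcases lt_or_ge u 0 with hu | hu
  · simpa [norm_tilt, hq₀ u hu] using hC
  · calc ‖tilt σ q u‖ ≤ C * Real.exp (c * u) * Real.exp (-(σ * u)) := by
          rw [norm_tilt]; gcongr; exact hq u hu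
      _ = C * Real.exp (-((σ - c) * u)) := by rw [mul_assoc, ← Real.exp_add]; ring_nf
      _ ≤ C := mul_le_of_le_one_right hC
          (Real.exp_le_one_iff.2 (neg_nonpos.2 (mul_nonneg (sub_nonneg.2 hσ) hu)))

lemma memLp_two_tilt (hqm : Measurable q) (hq₀ : ∀ u < 0, q u = 0)
    (hq : ∀ u, 0 ≤ u → ‖q u‖ ≤ C * Real.exp (c * u)) (hσ : c < σ) : MemLp (tilt σ q) 2 :=
  memLp_two_of_integrable_of_norm_le (integrable_tilt hqm hq₀ hq hσ) (norm_tilt_le hq₀ hq hσ.le)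

variable {V : ℝ}

lemma norm_indicator_Icc_le_exp (hq : ∀ u, 0 ≤ u → ‖q u‖ ≤ C * Real.exp (c * u)) (c' : ℝ) :
    ∀ u, 0 ≤ u → ‖(Set.Icc 0 V).indicator q u‖ ≤
      C * Real.exp (|c - c'| * V) * Real.exp (c' * u) := by
  have hC : 0 ≤ C := by simpa using (norm_nonneg _).trans (hq 0 le_rfl)
  intro u hu
  by_cases huV : u ∈ Set.Icc 0 V
  · rw [Set.indicator_of_mem huV, mul_assoc, ← Real.exp_add]
    refine (hq u hu).trans ?_
    gcongr
    have h : (c - c') * u ≤ |c - c'| * V := by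
      gcongr
      exacts [le_abs_self _, huV.2]
    linarith
  · rw [Set.indicator_of_notMem huV, norm_zero]
    positivity

lemma integrable_tilt_indicator_Icc (hqm : Measurable q)
    (hq : ∀ u, 0 ≤ u → ‖q u‖ ≤ C * Real.exp (c * u)) (σ : ℝ) :
    Integrable (tilt σ ((Set.Icc 0 V).indicator q)) :=
  integrable_tilt (hqm.indicator measurableSet_Icc)
    (fun _ hu ↦ Set.indicator_of_notMem (fun h ↦ hu.not_ge h.1) _)
    (norm_indicator_Icc_le_exp hq (σ - 1)) (sub_one_lt σ)

lemma memLp_two_tilt_indicator_Icc (hqm : Measurable q)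
    (hq : ∀ u, 0 ≤ u → ‖q u‖ ≤ C * Real.exp (c * u)) (σ : ℝ) :
    MemLp (tilt σ ((Set.Icc 0 V).indicator q)) 2 :=
  memLp_two_tilt (hqm.indicator measurableSet_Icc)
    (fun _ hu ↦ Set.indicator_of_notMem (fun h ↦ hu.not_ge h.1) _)
    (norm_indicator_Icc_le_exp hq (σ - 1)) (sub_one_lt σ)

lemma integral_conj_tilt_indicator_mul_tilt (hV : 0 ≤ V) (q : ℝ → ℂ) (σ τ : ℝ) :
    ∫ u, conj (tilt σ ((Set.Icc 0 V).indicator q) u) * tilt τ q u =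
      (∫ u in (0 : ℝ)..V, ‖q u‖ ^ 2 * Real.exp (-(σ + τ) * u) : ℝ) := by
  rw [intervalIntegral.integral_of_le hV, ← integral_Icc_eq_integral_Ioc,
    ← integral_indicator measurableSet_Icc, ← integral_complex_ofReal]
  refine integral_congr_ae (ae_of_all _ fun u ↦ ?_)
  by_cases hu : u ∈ Set.Icc 0 V
  · have hexp : Real.exp (-(σ + τ) * u) = Real.exp (-(σ * u)) * Real.exp (-(τ * u)) := by
      rw [← Real.exp_add]; ring_nf
    simp only [tilt, Set.indicator_of_mem hu, hexp, map_mul, Complex.conj_ofReal,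
      Complex.ofReal_mul, Complex.ofReal_pow, ← Complex.conj_mul']
    ring
  · simp [tilt, Set.indicator_of_notMem hu]

lemma integral_norm_tilt_indicator_sq (hV : 0 ≤ V) (q : ℝ → ℂ) (σ : ℝ) :
    ∫ u, ‖tilt σ ((Set.Icc 0 V).indicator q) u‖ ^ 2 =
      ∫ u in (0 : ℝ)..V, ‖q u‖ ^ 2 * Real.exp (-2 * σ * u) := by
  rw [← Complex.ofReal_inj, ← integral_complex_ofReal,
    show -2 * σ = -(σ + σ) by ring, ← integral_conj_tilt_indicator_mul_tilt hV]
  refine integral_congr_ae (ae_of_all _ fun u ↦ ?_)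
  by_cases hu : u ∈ Set.Icc 0 V
  · simp only [tilt, Set.indicator_of_mem hu, Complex.ofReal_pow, ← Complex.conj_mul']
  · simp [tilt, Set.indicator_of_notMem hu]

variable {E : ℂ → ℂ} {σ₀ σ₁ : ℝ} {B : ℝ → ℝ}

lemma memLp_two_line (hσ : σ₀ ≤ σ₁)
    (hE : ∀ s : ℂ, s.re ∈ Set.Icc σ₀ σ₁ → DifferentiableAt ℂ E s)
    (hE₂ : Integrable fun t : ℝ ↦ ‖E (σ₀ + t * I)‖ ^ 2) :
    MemLp (fun t : ℝ ↦ E (σ₀ + t * I)) 2 := by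
  have hcont : Continuous fun t : ℝ ↦ E (σ₀ + t * I) := by
    refine continuous_iff_continuousAt.2 fun t ↦ ?_
    exact ContinuousAt.comp (f := fun t : ℝ ↦ (σ₀ + t * I : ℂ))
      (hE (σ₀ + t * I) (by simpa using hσ)).continuousAt (by fun_prop)
  exact (memLp_two_iff_integrable_sq_norm hcont.aestronglyMeasurable).2 hE₂

/- The pairing of `E` with `s ↦ conj (laplace φ (2 σ₀ - conj s))`, where `φ` is the truncation of
`q`, is computed by Parseval on `Re s = σ₁` and moved to `Re s = σ₀` by Cauchy's theorem. -/
lemma integral_conj_laplace_indicator_mul (hqm : Measurable q) (hq₀ : ∀ u < 0, q u = 0)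
    (hq : ∀ u, 0 ≤ u → ‖q u‖ ≤ C * Real.exp (c * u)) (hσ : σ₀ ≤ σ₁) (hc : c < σ₁)
    (hE : ∀ s : ℂ, s.re ∈ Set.Icc σ₀ σ₁ → DifferentiableAt ℂ E s)
    (hE_laplace : ∀ t : ℝ, E (σ₁ + t * I) = laplace q (σ₁ + t * I))
    (hB : Tendsto B (cocompact ℝ) (𝓝 0))
    (hEB : ∀ s : ℂ, s.re ∈ Set.Icc σ₀ σ₁ → ‖E s‖ ≤ B s.im)
    (hE₂ : Integrable fun t : ℝ ↦ ‖E (σ₀ + t * I)‖ ^ 2) (hV : 0 ≤ V) :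
    ∫ t : ℝ, conj (laplace ((Set.Icc 0 V).indicator q) (σ₀ + t * I)) * E (σ₀ + t * I) =
      2 * π * (∫ u in (0 : ℝ)..V, ‖q u‖ ^ 2 * Real.exp (-2 * σ₀ * u) : ℝ) := by
  set φ := (Set.Icc 0 V).indicator q
  have hφ_int (σ : ℝ) : Integrable (tilt σ φ) := integrable_tilt_indicator_Icc hqm hq σ
  have hφ_L2 (σ : ℝ) : MemLp (tilt σ φ) 2 := memLp_two_tilt_indicator_Icc hqm hq σ
  have hφ : Integrable φ := by
    refine (hφ_int 0).congr (ae_of_all _ fun u ↦ ?_)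
    simp [tilt]
  have hφ_supp (u : ℝ) (hu : V < |u|) : φ u = 0 :=
    Set.indicator_of_notMem (fun h ↦ hu.not_ge ((abs_of_nonneg h.1).trans_le h.2)) _
  have hq_int := integrable_tilt hqm hq₀ hq hc
  have hq_L2 := memLp_two_tilt hqm hq₀ hq hc
  set Φ := reflectedLaplace σ₀ φ
  have hΦ₀ (t : ℝ) : Φ (σ₀ + t * I) = conj (laplace φ (σ₀ + t * I)) :=
    reflectedLaplace_line_self σ₀ φ t
  have integrable₀ : Integrable fun t : ℝ ↦ Φ (σ₀ + t * I) * E (σ₀ + t * I) := by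
    simp only [hΦ₀]
    exact (memLp_two_laplace_line (hφ_int σ₀) (hφ_L2 σ₀)).star.integrable_mul
      (memLp_two_line hσ hE hE₂)
  have integrable₁ : Integrable fun t : ℝ ↦ Φ (σ₁ + t * I) * E (σ₁ + t * I) := by
    simp only [reflectedLaplace_line, hE_laplace, Φ]
    exact (memLp_two_laplace_line (hφ_int _) (hφ_L2 _)).star.integrable_mul
      (memLp_two_laplace_line hq_int hq_L2)
  set M := Real.exp ((|σ₀| + (σ₁ - σ₀)) * V) * ∫ u, ‖φ u‖
  have shift := integral_vertical_line_eq (G := fun s ↦ Φ s * E s) hσ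
    (fun s hs ↦ (differentiable_reflectedLaplace_of_support hφ hφ_supp σ₀ s).mul (hE s hs))
    (by simpa using hB.const_mul M)
    (fun s hs ↦ by
      rw [norm_mul]
      exact mul_le_mul (norm_reflectedLaplace_le_of_support hφ hV hφ_supp hs) (hEB s hs)
        (norm_nonneg _) (by positivity))
    integrable₀ integrable₁
  simp only [hΦ₀] at shift
  rw [shift]
  simp only [reflectedLaplace_line, hE_laplace, Φ]
  rw [integral_conj_laplace_mul_laplace (hφ_int _) (hφ_L2 _) hq_int hq_L2,
    integral_conj_tilt_indicator_mul_tilt hV, show -(2 * σ₀ - σ₁ + σ₁) = -2 * σ₀ by ring]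

lemma integral_sq_norm_le_of_laplace_continuation
    (hqm : Measurable q) (hq₀ : ∀ u < 0, q u = 0)
    (hq : ∀ u, 0 ≤ u → ‖q u‖ ≤ C * Real.exp (c * u)) (hσ : σ₀ ≤ σ₁) (hc : c < σ₁)
    (hE : ∀ s : ℂ, s.re ∈ Set.Icc σ₀ σ₁ → DifferentiableAt ℂ E s)
    (hE_laplace : ∀ t : ℝ, E (σ₁ + t * I) = laplace q (σ₁ + t * I))
    (hB : Tendsto B (cocompact ℝ) (𝓝 0))
    (hEB : ∀ s : ℂ, s.re ∈ Set.Icc σ₀ σ₁ → ‖E s‖ ≤ B s.im)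
    (hE₂ : Integrable fun t : ℝ ↦ ‖E (σ₀ + t * I)‖ ^ 2) (hV : 0 ≤ V) :
    ∫ u in (0 : ℝ)..V, ‖q u‖ ^ 2 * Real.exp (-2 * σ₀ * u) ≤
      1 / (2 * π) * ∫ t : ℝ, ‖E (σ₀ + t * I)‖ ^ 2 := by
  have hpair := integral_conj_laplace_indicator_mul hqm hq₀ hq hσ hc hE hE_laplace hB hEB hE₂ hV
  have hφ_int := integrable_tilt_indicator_Icc (V := V) hqm hq σ₀
  have hφ_L2 := memLp_two_tilt_indicator_Icc (V := V) hqm hq σ₀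
  have hL2 := memLp_two_laplace_line hφ_int hφ_L2
  have henergy := integral_norm_laplace_sq hφ_int hφ_L2
  rw [integral_norm_tilt_indicator_sq hV] at henergy
  rw [memLp_two_iff_integrable_sq_norm hL2.1] at hL2
  set φ := (Set.Icc 0 V).indicator q
  set J := ∫ u in (0 : ℝ)..V, ‖q u‖ ^ 2 * Real.exp (-2 * σ₀ * u)
  have hJ : 0 ≤ J := intervalIntegral.integral_nonneg hV fun u _ ↦ by positivity
  have am_gm (t : ℝ) : ‖conj (laplace φ (σ₀ + t * I)) * E (σ₀ + t * I)‖ ≤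
      (‖laplace φ (σ₀ + t * I)‖ ^ 2 + ‖E (σ₀ + t * I)‖ ^ 2) / 2 := by
    rw [norm_mul, RCLike.norm_conj]
    linarith [two_mul_le_add_sq ‖laplace φ (σ₀ + t * I)‖ ‖E (σ₀ + t * I)‖]
  have hle : 2 * π * J ≤ (2 * π * J + ∫ t : ℝ, ‖E (σ₀ + t * I)‖ ^ 2) / 2 := calc
    2 * π * J = ‖(2 * π * J : ℂ)‖ := by
      norm_cast; exact (Real.norm_of_nonneg (by positivity)).symm
    _ ≤ _ := by
      rw [← hpair, ← henergy, ← integral_add hL2 hE₂, ← integral_div]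
      exact norm_integral_le_of_norm_le ((hL2.add hE₂).div_const 2) (ae_of_all _ am_gm)
  rw [one_div, ← div_eq_inv_mul, le_div_iff₀ two_pi_pos]
  linarith

end PaleyWiener

/-- The entire function `(s - 1) ζ(s)`, with the value `1` at the removed pole `s = 1`. -/
noncomputable def entireZeta : ℂ → ℂ :=
  Function.update (fun s ↦ (s - 1) * riemannZeta s) 1 1

/-- The fractional part of `t`, restricted to `t > 1`. -/
noncomputable def fractTail : ℝ → ℂ := (Set.Ioi 1).indicator fun t ↦ (Int.fract t : ℝ)

section EntireZeta

variable {s : ℂ}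

lemma entireZeta_of_ne_one (hs : s ≠ 1) : entireZeta s = (s - 1) * riemannZeta s :=
  Function.update_of_ne hs _ _

lemma entireZeta_one : entireZeta 1 = 1 := Function.update_self _ _ _

lemma differentiable_entireZeta : Differentiable ℂ entireZeta := by
  have differentiableAt_of_ne_one (s : ℂ) (hs : s ≠ 1) : DifferentiableAt ℂ entireZeta s := by
    have h : DifferentiableAt ℂ (fun s ↦ (s - 1) * riemannZeta s) s :=
      (differentiableAt_id.sub_const 1).mul (differentiableAt_riemannZeta hs)
    refine h.congr_of_eventuallyEq ?_
    filter_upwards [isOpen_ne.mem_nhds hs] with z hz using entireZeta_of_ne_one hz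
  intro s
  rcases eq_or_ne s 1 with rfl | hs
  · refine (Complex.analyticAt_of_differentiable_on_punctured_nhds_of_continuousAt ?_
      (continuousAt_update_same.2 riemannZeta_residue_one)).differentiableAt
    filter_upwards [self_mem_nhdsWithin] with z hz using differentiableAt_of_ne_one z hz
  · exact differentiableAt_of_ne_one s hs

lemma measurable_fractTail : Measurable fractTail :=
  (Complex.measurable_ofReal.comp measurable_fract).indicator measurableSet_Ioi

lemma norm_fractTail_le_one (t : ℝ) : ‖fractTail t‖ ≤ 1 := by
  refine (norm_indicator_le_norm_self _ t).trans ?_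
  rw [Complex.norm_real, Real.norm_of_nonneg (Int.fract_nonneg t)]
  exact (Int.fract_lt_one t).le

lemma differentiableAt_mellin_fractTail (hs : s.re < 0) :
    DifferentiableAt ℂ (mellin fractTail) s := by
  refine mellin_differentiableAt_of_isBigO_rpow (a := 0) (b := s.re - 1) ?_ ?_ hs ?_ (by linarith)
  · have h : LocallyIntegrable fractTail :=
      (locallyIntegrable_const (1 : ℝ)).mono measurable_fractTail.aestronglyMeasurable
        (ae_of_all _ fun t ↦ by simpa using norm_fractTail_le_one t)
    exact h.locallyIntegrableOn _
  · simp only [neg_zero, Real.rpow_zero]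
    exact .of_bound 1 (.of_forall fun t ↦ by simpa using norm_fractTail_le_one t)
  · refine .of_bound 1 ?_
    filter_upwards [mem_nhdsWithin_of_mem_nhds (Iio_mem_nhds one_pos)] with t ht
    rw [fractTail, Set.indicator_of_notMem (Set.notMem_Ioi.2 (Set.mem_Iio.1 ht).le), norm_zero]
    positivity

lemma mellin_fractTail_neg (s : ℂ) :
    mellin fractTail (-s) = ∫ t in Set.Ioi (1 : ℝ), (Int.fract t : ℝ) * (t : ℂ) ^ (-(s + 1)) := by
  have hIoi : Set.Ioi (0 : ℝ) ∩ Set.Ioi 1 = Set.Ioi 1 :=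
    Set.inter_eq_right.2 (Set.Ioi_subset_Ioi zero_le_one)
  rw [mellin, ← hIoi, ← setIntegral_indicator measurableSet_Ioi]
  refine integral_congr_ae (ae_of_all _ fun t ↦ ?_)
  by_cases ht : t ∈ Set.Ioi (1 : ℝ)
  · simp only [fractTail, Set.indicator_of_mem ht, smul_eq_mul]
    ring_nf
  · simp [fractTail, Set.indicator_of_notMem ht]

lemma norm_fract_mul_cpow_le (s : ℂ) {t : ℝ} (ht : 1 < t) :
    ‖((Int.fract t : ℝ) : ℂ) * (t : ℂ) ^ (-(s + 1))‖ ≤ t ^ (-s.re - 1) := by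
  have hre : (-(s + 1)).re = -s.re - 1 := by simp; ring
  rw [norm_mul, Complex.norm_cpow_eq_rpow_re_of_pos (one_pos.trans ht), hre, Complex.norm_real,
    Real.norm_of_nonneg (Int.fract_nonneg t)]
  exact mul_le_of_le_one_left (by positivity) (Int.fract_lt_one t).le

lemma integrableOn_fract_mul_cpow (hs : 0 < s.re) :
    IntegrableOn (fun t : ℝ ↦ (Int.fract t : ℝ) * (t : ℂ) ^ (-(s + 1))) (Set.Ioi 1) := by
  refine (integrableOn_Ioi_rpow_of_lt (a := -s.re - 1) (by linarith) one_pos).mono' ?_ ?_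
  · exact ((Complex.measurable_ofReal.comp measurable_fract).mul
      (by fun_prop : Measurable fun t : ℝ ↦ (t : ℂ) ^ (-(s + 1)))).aestronglyMeasurable
  · filter_upwards [ae_restrict_mem measurableSet_Ioi] with t ht
    exact norm_fract_mul_cpow_le s ht

lemma norm_mellin_fractTail_neg_le (hs : 0 < s.re) : ‖mellin fractTail (-s)‖ ≤ 1 / s.re := by
  have hint : ∫ t in Set.Ioi (1 : ℝ), t ^ (-s.re - 1) = 1 / s.re := by
    rw [integral_Ioi_rpow_of_lt (by linarith) one_pos]
    simp
  rw [mellin_fractTail_neg, ← hint]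
  refine norm_integral_le_of_norm_le (integrableOn_Ioi_rpow_of_lt (by linarith) one_pos) ?_
  filter_upwards [ae_restrict_mem measurableSet_Ioi] with t ht
  exact norm_fract_mul_cpow_le s ht

lemma natFloor_mul_cpow_eq (s : ℂ) {t : ℝ} (ht : 0 < t) :
    (⌊t⌋₊ : ℂ) * (t : ℂ) ^ (-(s + 1)) =
      (t : ℂ) ^ (-s) - (Int.fract t : ℝ) * (t : ℂ) ^ (-(s + 1)) := by
  have hfloor : (⌊t⌋₊ : ℂ) = t - (Int.fract t : ℝ) := by
    rw [← Complex.ofReal_sub, Int.self_sub_fract, ← natCast_floor_eq_intCast_floor ht.le,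
      Complex.ofReal_natCast]
  have hcpow : (t : ℂ) ^ (-s) = t * (t : ℂ) ^ (-(s + 1)) := by
    have h := Complex.cpow_add 1 (-(s + 1)) (Complex.ofReal_ne_zero.2 ht.ne')
    rw [Complex.cpow_one] at h
    rw [← h]
    ring_nf
  rw [hfloor, hcpow, sub_mul]

lemma entireZeta_eq_sub_mellin_of_one_lt (hs : 1 < s.re) :
    entireZeta s = s - s * (s - 1) * mellin fractTail (-s) := by
  have hs₁ : s - 1 ≠ 0 := sub_ne_zero.2 fun h ↦ by simp [h] at hs
  have hpow : ∫ t in Set.Ioi (1 : ℝ), (t : ℂ) ^ (-s) = 1 / (s - 1) := by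
    rw [integral_Ioi_cpow_of_lt (by simpa using hs) one_pos, Complex.ofReal_one, Complex.one_cpow,
      neg_div, ← div_neg]
    ring_nf
  have abel := LSeries_eq_mul_integral (1 : ℕ → ℂ) zero_le_one hs (LSeriesSummable_one_iff.2 hs)
    (.of_bound 1 (.of_forall fun n ↦ by simp))
  have hfloor : ∫ t in Set.Ioi (1 : ℝ),
      (∑ k ∈ Finset.Icc 1 ⌊t⌋₊, (1 : ℕ → ℂ) k) * (t : ℂ) ^ (-(s + 1)) =
        1 / (s - 1) - mellin fractTail (-s) := by
    rw [← hpow, mellin_fractTail_neg, ← integral_sub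
      (integrableOn_Ioi_cpow_of_lt (by simpa using hs) one_pos)
      (integrableOn_fract_mul_cpow (by linarith))]
    refine setIntegral_congr_fun measurableSet_Ioi fun t ht ↦ ?_
    simpa using natFloor_mul_cpow_eq s (one_pos.trans ht)
  rw [entireZeta_of_ne_one (sub_ne_zero.1 hs₁), ← LSeries_one_eq_riemannZeta hs, abel, hfloor]
  field_simp

lemma entireZeta_eq_sub_mellin (hs : 0 < s.re) :
    entireZeta s = s - s * (s - 1) * mellin fractTail (-s) := by
  have hopen : IsOpen {s : ℂ | 0 < s.re} := isOpen_lt continuous_const Complex.continuous_re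
  have hdiff : DifferentiableOn ℂ (fun s : ℂ ↦ s - s * (s - 1) * mellin fractTail (-s))
      {s : ℂ | 0 < s.re} := fun z hz ↦ by
    have hmellin : DifferentiableAt ℂ (fun s : ℂ ↦ mellin fractTail (-s)) z :=
      DifferentiableAt.comp (g := mellin fractTail) (f := fun s : ℂ ↦ -s) z
        (differentiableAt_mellin_fractTail (by simpa using hz)) (by fun_prop)
    have hpoly : DifferentiableAt ℂ (fun s : ℂ ↦ s * (s - 1)) z := by fun_prop
    exact (differentiableAt_id.sub (hpoly.mul hmellin)).differentiableWithinAt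
  refine (differentiable_entireZeta.differentiableOn.analyticOnNhd hopen)
    |>.eqOn_of_preconnected_of_eventuallyEq (hdiff.analyticOnNhd hopen)
      (convex_halfSpace_re_gt 0).isPreconnected (z₀ := 2) (by simp) ?_ hs
  filter_upwards [(isOpen_lt continuous_const Complex.continuous_re).mem_nhds
    (by simp : (1 : ℝ) < (2 : ℂ).re)] with z hz using entireZeta_eq_sub_mellin_of_one_lt hz

lemma norm_entireZeta_le (hs : 1 / 10 ≤ s.re) (hs' : s.re ≤ 4) :
    ‖entireZeta s‖ ≤ 50 * (|s.im| + 3) ^ 2 := by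
  have hmellin : ‖mellin fractTail (-s)‖ ≤ 10 := by
    refine (norm_mellin_fractTail_neg_le (by linarith)).trans ?_
    rw [div_le_iff₀ (by linarith)]
    linarith
  have hnorm (c : ℝ) (hc : |s.re - c| ≤ 4) : ‖s - c‖ ≤ 4 + |s.im| := by
    refine (Complex.norm_le_abs_re_add_abs_im _).trans ?_
    simpa using hc
  have hs₀ : ‖s‖ ≤ 4 + |s.im| := by
    simpa using hnorm 0 (abs_le.2 ⟨by linarith, by linarith⟩)
  have hs₁ : ‖s - 1‖ ≤ 4 + |s.im| := by
    simpa using hnorm 1 (abs_le.2 ⟨by linarith, by linarith⟩)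
  rw [entireZeta_eq_sub_mellin (by linarith)]
  calc ‖s - s * (s - 1) * mellin fractTail (-s)‖
      ≤ ‖s‖ + ‖s‖ * ‖s - 1‖ * ‖mellin fractTail (-s)‖ := by
        simpa only [norm_mul] using norm_sub_le s (s * (s - 1) * mellin fractTail (-s))
    _ ≤ (4 + |s.im|) + (4 + |s.im|) * (4 + |s.im|) * 10 := by gcongr
    _ ≤ 50 * (|s.im| + 3) ^ 2 := by nlinarith [abs_nonneg s.im]

lemma norm_riemannZeta_ge_of_re_eq_two (hs : s.re = 2) : 3 / 10 ≤ ‖riemannZeta s‖ := by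
  have hnorm (n : ℕ) : ‖1 / ((n : ℂ) + 1) ^ s‖ = 1 / ((n : ℝ) + 1) ^ 2 := by
    rw [norm_div, norm_one, ← Nat.cast_add_one, ← Nat.cast_add_one,
      Complex.norm_natCast_cpow_of_pos n.succ_pos, hs, Real.rpow_ofNat]
  have hsum₁ : HasSum (fun n : ℕ ↦ 1 / ((n : ℝ) + 1) ^ 2) (π ^ 2 / 6) := by
    simpa using (hasSum_nat_add_iff' (f := fun n : ℕ ↦ 1 / (n : ℝ) ^ 2) 1).2 hasSum_zeta_two
  have hsum₂ : HasSum (fun n : ℕ ↦ 1 / (((n + 1 : ℕ) : ℝ) + 1) ^ 2) (π ^ 2 / 6 - 1) := by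
    simpa using (hasSum_nat_add_iff' (f := fun n : ℕ ↦ 1 / ((n : ℝ) + 1) ^ 2) 1).2 hsum₁
  have hsummable : Summable fun n : ℕ ↦ 1 / ((n : ℂ) + 1) ^ s :=
    .of_norm (by simpa only [hnorm] using hsum₁.summable)
  have htail : ‖∑' n : ℕ, 1 / (((n + 1 : ℕ) : ℂ) + 1) ^ s‖ ≤ π ^ 2 / 6 - 1 :=
    tsum_of_norm_bounded hsum₂ fun n ↦ (hnorm (n + 1)).le
  rw [zeta_eq_tsum_one_div_nat_add_one_cpow (by rw [hs]; norm_num), hsummable.tsum_eq_zero_add]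
  have hfirst : (1 : ℂ) / (((0 : ℕ) : ℂ) + 1) ^ s = 1 := by simp
  have htri := norm_sub_le_norm_add (1 : ℂ) (∑' n : ℕ, 1 / (((n + 1 : ℕ) : ℂ) + 1) ^ s)
  rw [norm_one] at htri
  rw [hfirst]
  nlinarith [Real.pi_lt_d2, Real.pi_pos]

lemma norm_entireZeta_ge_of_re_eq_two (hs : s.re = 2) : 3 / 10 ≤ ‖entireZeta s‖ := by
  have hs₁ : s ≠ 1 := fun h ↦ by simp [h] at hs
  have hsub : 1 ≤ ‖s - 1‖ := by
    refine le_trans ?_ (Complex.abs_re_le_norm (s - 1))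
    norm_num [hs]
  rw [entireZeta_of_ne_one hs₁, norm_mul]
  nlinarith [norm_riemannZeta_ge_of_re_eq_two hs]

end EntireZeta

section LocalZeros

variable {f g : ℂ → ℂ} {c z : ℂ} {S : Finset ℂ} {m : ℂ → ℕ} {r R M A : ℝ}

lemma exists_eq_sub_pow_mul (hg : Differentiable ℂ g) (a : ℂ) (ha : analyticOrderAt g a ≠ ⊤) :
    ∃ G : ℂ → ℂ, Differentiable ℂ G ∧ G a ≠ 0 ∧
      ∀ z, g z = (z - a) ^ analyticOrderNatAt g a * G z := by
  obtain ⟨h, hh, hha, hgh⟩ := (hg.analyticAt a).analyticOrderAt_ne_top.1 ha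
  set m := analyticOrderNatAt g a
  set G : ℂ → ℂ := Function.update (fun z ↦ g z / (z - a) ^ m) a (h a)
  have hG : ∀ z, z ≠ a → G z = g z / (z - a) ^ m := fun z hz ↦ Function.update_of_ne hz _ _
  have hGa : G a = h a := Function.update_self _ _ _
  have hpow : ∀ z, z ≠ a → (z - a) ^ m ≠ 0 := fun z hz ↦ pow_ne_zero _ (sub_ne_zero.2 hz)
  refine ⟨G, fun z ↦ ?_, hGa ▸ hha, fun z ↦ ?_⟩
  · rcases eq_or_ne z a with rfl | hz
    · refine hh.differentiableAt.congr_of_eventuallyEq ?_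
      filter_upwards [hgh] with w hw
      rcases eq_or_ne w z with rfl | hwz
      · exact hGa
      · rw [hG w hwz, hw, smul_eq_mul, mul_div_cancel_left₀ _ (hpow w hwz)]
    · have hdiv : DifferentiableAt ℂ (fun w ↦ g w / (w - a) ^ m) z :=
        (hg z).div (by fun_prop) (hpow z hz)
      refine hdiv.congr_of_eventuallyEq ?_
      filter_upwards [isOpen_ne.mem_nhds hz] with w hw using hG w hw
  · rcases eq_or_ne z a with rfl | hz
    · exact hGa ▸ hgh.self_of_nhds
    · rw [hG z hz, mul_div_cancel₀ _ (hpow z hz)]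

lemma exists_eq_prod_sub_pow_mul (hf : Differentiable ℂ f) (S : Finset ℂ)
    (hS : ∀ ρ ∈ S, analyticOrderAt f ρ ≠ ⊤) :
    ∃ g : ℂ → ℂ, Differentiable ℂ g ∧ (∀ ρ ∈ S, g ρ ≠ 0) ∧
      ∀ z, f z = (∏ ρ ∈ S, (z - ρ) ^ analyticOrderNatAt f ρ) * g z := by
  induction S using Finset.induction_on with
  | empty => exact ⟨f, hf, by simp, by simp⟩
  | insert a S ha ih =>
    obtain ⟨g, hg, hgS, hfg⟩ := ih fun ρ hρ ↦ hS ρ (Finset.mem_insert_of_mem hρ)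
    set P : ℂ → ℂ := fun z ↦ ∏ ρ ∈ S, (z - ρ) ^ analyticOrderNatAt f ρ
    have hP : Differentiable ℂ P := by fun_prop
    have hPa : P a ≠ 0 := Finset.prod_ne_zero_iff.2 fun ρ hρ ↦
      pow_ne_zero _ (sub_ne_zero.2 fun h ↦ ha (h ▸ hρ))
    have horder : analyticOrderAt f a = analyticOrderAt g a := by
      rw [show f = P * g from funext hfg, analyticOrderAt_mul (hP.analyticAt a) (hg.analyticAt a),
        (hP.analyticAt a).analyticOrderAt_eq_zero.2 hPa, zero_add]
    obtain ⟨G, hG, hGa, hgG⟩ :=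
      exists_eq_sub_pow_mul hg a (horder ▸ hS a (Finset.mem_insert_self a S))
    refine ⟨G, hG, fun ρ hρ hGρ ↦ ?_, fun z ↦ ?_⟩
    · rcases Finset.mem_insert.1 hρ with rfl | hρ
      · exact hGa hGρ
      · exact hgS ρ hρ (by rw [hgG, hGρ, mul_zero])
    · rw [Finset.prod_insert ha, hfg z, hgG z,
        show analyticOrderNatAt f a = analyticOrderNatAt g a from congrArg ENat.toNat horder]
      ring

lemma norm_le_of_norm_le_on_sphere (hf : Differentiable ℂ f) (hR : 0 < R)
    (hM : ∀ z, dist z c = R → ‖f z‖ ≤ M) (hz : dist z c ≤ R) : ‖f z‖ ≤ M := by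
  refine Complex.norm_le_of_forall_mem_frontier_norm_le (U := ball c R) isBounded_ball
    hf.diffContOnCl (fun w hw ↦ hM w ?_) (by rwa [closure_ball c hR.ne'])
  rwa [frontier_ball c hR.ne'] at hw

lemma norm_blaschke_factor_eq (hR : 0 < R) (a : ℂ) (hz : ‖z‖ = R) :
    ‖((R : ℂ) ^ 2 - conj a * z) / R‖ = ‖z - a‖ := by
  rw [← hz, ← Complex.conj_mul', ← sub_mul, ← map_sub, norm_div, norm_mul, RCLike.norm_conj,
    Complex.norm_real, norm_norm, hz, mul_div_cancel_right₀ _ hR.ne']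

lemma norm_prod_sub_pow_le (hS : ∀ ρ ∈ S, dist ρ c ≤ r) :
    ‖∏ ρ ∈ S, (c - ρ) ^ m ρ‖ ≤ r ^ ∑ ρ ∈ S, m ρ := by
  rw [norm_prod, ← Finset.prod_pow_eq_pow_sum]
  refine Finset.prod_le_prod (fun _ _ ↦ norm_nonneg _) fun ρ hρ ↦ ?_
  rw [norm_pow, ← dist_eq_norm, dist_comm]
  exact pow_le_pow_left₀ dist_nonneg (hS ρ hρ) _

lemma pow_sum_le_norm_prod_sub_pow (hr : r ≤ R) (hS : ∀ ρ ∈ S, dist ρ c ≤ r)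
    (hz : dist z c = R) : (R - r) ^ ∑ ρ ∈ S, m ρ ≤ ‖∏ ρ ∈ S, (z - ρ) ^ m ρ‖ := by
  rw [norm_prod, ← Finset.prod_pow_eq_pow_sum]
  refine Finset.prod_le_prod (fun _ _ ↦ pow_nonneg (sub_nonneg.2 hr) _) fun ρ hρ ↦ ?_
  rw [norm_pow, ← dist_eq_norm]
  have htri := dist_triangle z ρ c
  exact pow_le_pow_left₀ (sub_nonneg.2 hr) (by linarith [hS ρ hρ]) _

/- Replacing each factor `z - ρ` by its Blaschke conjugate keeps the modulus on the circle and
raises it to `R` at the centre. -/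
lemma pow_sum_mul_norm_le (hg : Differentiable ℂ g)
    (hfg : ∀ z, f z = (∏ ρ ∈ S, (z - ρ) ^ m ρ) * g z) (hR : 0 < R)
    (hM : ∀ z, dist z c = R → ‖f z‖ ≤ M) : R ^ (∑ ρ ∈ S, m ρ) * ‖g c‖ ≤ M := by
  let h : ℂ → ℂ := fun z ↦
    (∏ ρ ∈ S, (((R : ℂ) ^ 2 - conj (ρ - c) * (z - c)) / R) ^ m ρ) * g z
  have hh : Differentiable ℂ h := Differentiable.mul (by fun_prop) hg
  have hsphere : ∀ z, dist z c = R → ‖h z‖ ≤ M := fun z hz ↦ by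
    refine le_of_eq_of_le ?_ (hM z hz)
    simp only [h, hfg z, norm_mul, norm_prod, norm_pow]
    congr 1
    refine Finset.prod_congr rfl fun ρ _ ↦ ?_
    rw [norm_blaschke_factor_eq hR _ (by rwa [← dist_eq_norm]), sub_sub_sub_cancel_right]
  have hcentre : ‖h c‖ = R ^ (∑ ρ ∈ S, m ρ) * ‖g c‖ := by
    have hRR : (R : ℂ) ^ 2 / R = R := by
      rw [sq, mul_div_cancel_right₀ _ (Complex.ofReal_ne_zero.2 hR.ne')]
    simp only [h, sub_self, mul_zero, sub_zero, hRR, Finset.prod_pow_eq_pow_sum, norm_mul,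
      norm_pow, Complex.norm_real, Real.norm_of_nonneg hR.le]
  exact hcentre ▸ norm_le_of_norm_le_on_sphere hh hR hsphere (by simpa using hR.le)

lemma pow_sum_mul_norm_le_of_mem_closedBall (hg : Differentiable ℂ g)
    (hfg : ∀ z, f z = (∏ ρ ∈ S, (z - ρ) ^ m ρ) * g z) (hr : r ≤ R) (hR : 0 < R)
    (hS : ∀ ρ ∈ S, dist ρ c ≤ r) (hM : ∀ z, dist z c = R → ‖f z‖ ≤ M) (hz : dist z c ≤ R) :
    (R - r) ^ (∑ ρ ∈ S, m ρ) * ‖g z‖ ≤ M := by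
  have hsphere : ∀ w, dist w c = R → ‖((R - r : ℝ) : ℂ) ^ (∑ ρ ∈ S, m ρ) * g w‖ ≤ M :=
    fun w hw ↦ by
      refine le_trans ?_ (hM w hw)
      rw [hfg w, norm_mul, norm_mul, norm_pow, Complex.norm_real,
        Real.norm_of_nonneg (sub_nonneg.2 hr)]
      gcongr
      exact pow_sum_le_norm_prod_sub_pow hr hS hw
  have h := norm_le_of_norm_le_on_sphere (hg.const_mul _) hR hsphere hz
  rwa [norm_mul, norm_pow, Complex.norm_real, Real.norm_of_nonneg (sub_nonneg.2 hr)] at h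

lemma exists_log_branch (hg : Differentiable ℂ g) (hr : 0 < r) (hg₀ : ∀ z ∈ ball c r, g z ≠ 0) :
    ∃ L : ℂ → ℂ, L c = 0 ∧ (∀ z ∈ ball c r, HasDerivAt L (logDeriv g z) z) ∧
      ∀ z ∈ ball c r, g z = g c * Complex.exp (L z) := by
  obtain ⟨L₀, hL₀⟩ := DifferentiableOn.isExactOn_ball (f := logDeriv g) (c := c) (r := r)
    fun z hz ↦ ((hg.analyticAt z).deriv.differentiableAt.div (hg z)
      (hg₀ z hz)).differentiableWithinAt
  have hL : ∀ z ∈ ball c r, HasDerivAt (fun z ↦ L₀ z - L₀ c) (logDeriv g z) z :=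
    fun z hz ↦ (hL₀ z hz).sub_const _
  refine ⟨fun z ↦ L₀ z - L₀ c, sub_self _, hL, fun z hz ↦ ?_⟩
  have hderiv : ∀ z ∈ ball c r,
      HasDerivAt (fun z ↦ g z * Complex.exp (-(L₀ z - L₀ c))) 0 z := fun z hz ↦ by
    refine ((hg z).hasDerivAt.mul (hL z hz).neg.cexp).congr_deriv ?_
    rw [logDeriv_apply]
    field_simp [hg₀ z hz]
    ring
  have hconst := isOpen_ball.is_const_of_deriv_eq_zero (convex_ball c r).isPreconnected
    (fun w hw ↦ (hderiv w hw).differentiableAt.differentiableWithinAt)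
    (fun w hw ↦ (hderiv w hw).deriv) hz (mem_ball_self hr)
  simp only [sub_self, neg_zero, Complex.exp_zero, mul_one] at hconst
  rw [← hconst, mul_assoc, ← Complex.exp_add, neg_add_cancel, Complex.exp_zero, mul_one]

lemma norm_logDeriv_le_of_norm_le_exp (hg : Differentiable ℂ g)
    (hg₀ : ∀ z ∈ ball c r, g z ≠ 0) (hA : 0 < A)
    (hgA : ∀ z ∈ ball c r, ‖g z‖ ≤ Real.exp A * ‖g c‖) {r₁ r₂ : ℝ} (h₁₂ : r₁ < r₂) (h₂ : r₂ < r)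
    (hz : dist z c ≤ r₁) : ‖logDeriv g z‖ ≤ 2 * A * r₂ / (r - r₂) / (r₂ - r₁) := by
  have hr : 0 < r := by linarith [dist_nonneg (x := z) (y := c)]
  obtain ⟨L, hLc, hL, hexp⟩ := exists_log_branch hg hr hg₀
  have hgc : 0 < ‖g c‖ := norm_pos_iff.2 (hg₀ c (mem_ball_self hr))
  have hre : ∀ w ∈ ball c r, (L w).re ≤ A := fun w hw ↦ by
    have h := hgA w hw
    rw [hexp w hw, norm_mul, mul_comm, Complex.norm_exp] at h
    exact Real.exp_le_exp.1 (le_of_mul_le_mul_right h hgc)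
  have hball : ∀ {w}, w ∈ ball (0 : ℂ) r → c + w ∈ ball c r := fun hw ↦ by
    simpa [dist_eq_norm] using hw
  have hnorm : ∀ w, dist w c ≤ r₂ → ‖L w‖ ≤ 2 * A * r₂ / (r - r₂) := fun w hw ↦ by
    have h := Complex.borelCaratheodory_zero (f := fun w ↦ L (c + w)) (z := w - c) hA
      (fun v hv ↦ (DifferentiableAt.comp (g := L) (f := fun w ↦ c + w) v
        (hL _ (hball hv)).differentiableAt (by fun_prop)).differentiableWithinAt)
      (fun v hv ↦ hre _ (hball hv)) hr (by simpa [← dist_eq_norm] using hw.trans_lt h₂)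
      (by simpa using hLc)
    rw [add_sub_cancel, ← dist_eq_norm] at h
    refine h.trans ?_
    have hr₂ : 0 ≤ r₂ := dist_nonneg.trans hw
    gcongr
  have hsub : ∀ w, dist w z ≤ r₂ - r₁ → dist w c ≤ r₂ := fun w hw ↦ by
    linarith [dist_triangle w z c]
  rw [← (hL z (mem_ball.2 (by linarith))).deriv]
  refine Complex.norm_deriv_le_of_forall_mem_sphere_norm_le (sub_pos.2 h₁₂)
    (DifferentiableOn.diffContOnCl fun w hw ↦ ?_) fun w hw ↦ hnorm w (hsub w (mem_sphere.1 hw).le)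
  rw [closure_ball _ (sub_pos.2 h₁₂).ne'] at hw
  exact (hL w ((hsub w hw).trans_lt h₂)).differentiableAt.differentiableWithinAt

lemma logDeriv_eq_sum_add_of_eq_prod (hg : Differentiable ℂ g)
    (hfg : ∀ z, f z = (∏ ρ ∈ S, (z - ρ) ^ m ρ) * g z) (hzS : z ∉ S) (hgz : g z ≠ 0) :
    logDeriv f z = ∑ ρ ∈ S, (m ρ : ℂ) / (z - ρ) + logDeriv g z := by
  have hpow : ∀ ρ ∈ S, (z - ρ) ^ m ρ ≠ 0 := fun ρ hρ ↦
    pow_ne_zero _ (sub_ne_zero.2 fun h ↦ hzS (h ▸ hρ))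
  rw [funext hfg, logDeriv_mul z (Finset.prod_ne_zero_iff.2 hpow) hgz (by fun_prop) (hg z),
    logDeriv_prod (f := fun ρ z ↦ (z - ρ) ^ m ρ) hpow fun ρ _ ↦ by fun_prop]
  congr 1
  refine Finset.sum_congr rfl fun ρ _ ↦ ?_
  rw [logDeriv_fun_pow (by fun_prop)]
  simp [logDeriv_apply, div_eq_mul_inv]

lemma div_pow_sum_order_le (hf : Differentiable ℂ f) (hfS : ∀ ρ ∈ S, analyticOrderAt f ρ ≠ ⊤)
    (hr : 0 < r) (hR : 0 < R) (hS : ∀ ρ ∈ S, dist ρ c ≤ r)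
    (hM : ∀ z, dist z c = R → ‖f z‖ ≤ M) (hfc : f c ≠ 0) :
    (R / r) ^ (∑ ρ ∈ S, analyticOrderNatAt f ρ) ≤ M / ‖f c‖ := by
  obtain ⟨g, hg, -, hfg⟩ := exists_eq_prod_sub_pow_mul hf S hfS
  set N := ∑ ρ ∈ S, analyticOrderNatAt f ρ
  rw [le_div_iff₀ (norm_pos_iff.2 hfc)]
  calc (R / r) ^ N * ‖f c‖ ≤ (R / r) ^ N * (r ^ N * ‖g c‖) := by
        rw [hfg c, norm_mul]
        gcongr
        exact norm_prod_sub_pow_le hS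
    _ = R ^ N * ‖g c‖ := by rw [← mul_assoc, ← mul_pow, div_mul_cancel₀ _ hr.ne']
    _ ≤ M := pow_sum_mul_norm_le hg hfg hR hM

lemma sum_order_le (hf : Differentiable ℂ f) (hfS : ∀ ρ ∈ S, analyticOrderAt f ρ ≠ ⊤)
    (hS : ∀ ρ ∈ S, dist ρ c ≤ 8 / 5) (hM : ∀ z, dist z c = 9 / 5 → ‖f z‖ ≤ M) (hfc : f c ≠ 0) :
    ((∑ ρ ∈ S, analyticOrderNatAt f ρ : ℕ) : ℝ) ≤ 9 * Real.log (M / ‖f c‖) := by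
  have hpow := div_pow_sum_order_le hf hfS (by norm_num) (by norm_num) hS hM hfc
  have hlog := Real.log_le_log (by positivity) hpow
  rw [Real.log_pow] at hlog
  have hratio : 1 / 9 ≤ Real.log (9 / 5 / (8 / 5)) := by
    have h := Real.one_sub_inv_le_log_of_pos (x := 9 / 5 / (8 / 5)) (by norm_num)
    norm_num at h ⊢
    linarith
  have hmul := mul_le_mul_of_nonneg_left hratio
    (Nat.cast_nonneg (α := ℝ) (∑ ρ ∈ S, analyticOrderNatAt f ρ))
  linarith

lemma eight_pow_le_exp (n : ℕ) : (8 : ℝ) ^ n ≤ Real.exp (3 * n) := by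
  have htwo : (2 : ℝ) ≤ Real.exp 1 := by linarith [Real.add_one_le_exp 1]
  calc (8 : ℝ) ^ n = 2 ^ (3 * n) := by rw [pow_mul]; norm_num
    _ ≤ Real.exp 1 ^ (3 * n) := by gcongr
    _ = Real.exp (3 * n) := by rw [← Real.exp_nat_mul]; push_cast; ring_nf

lemma norm_cofactor_le_exp_mul_norm (hf : Differentiable ℂ f)
    (hfS : ∀ ρ ∈ S, analyticOrderAt f ρ ≠ ⊤) (hS : ∀ ρ ∈ S, dist ρ c ≤ 8 / 5)
    (hM : ∀ z, dist z c = 9 / 5 → ‖f z‖ ≤ M) (hfc : f c ≠ 0) (hg : Differentiable ℂ g)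
    (hfg : ∀ z, f z = (∏ ρ ∈ S, (z - ρ) ^ analyticOrderNatAt f ρ) * g z)
    (hz : dist z c ≤ 9 / 5) : ‖g z‖ ≤ Real.exp (28 * Real.log (M / ‖f c‖)) * ‖g c‖ := by
  have hcount := sum_order_le hf hfS hS hM hfc
  have hgz := pow_sum_mul_norm_le_of_mem_closedBall hg hfg (by norm_num) (by norm_num) hS hM hz
  set N := ∑ ρ ∈ S, analyticOrderNatAt f ρ
  have hfc' : 0 < ‖f c‖ := norm_pos_iff.2 hfc
  have hMpos : 0 < M :=
    hfc'.trans_le (norm_le_of_norm_le_on_sphere hf (by norm_num) hM (by simp; norm_num))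
  have hcentre : ‖f c‖ ≤ (8 / 5) ^ N * ‖g c‖ := by
    rw [hfg c, norm_mul]
    gcongr
    exact norm_prod_sub_pow_le hS
  calc ‖g z‖ = 5 ^ N * ((9 / 5 - 8 / 5) ^ N * ‖g z‖) := by
        rw [← mul_assoc, ← mul_pow]; norm_num
    _ ≤ 5 ^ N * (M / ‖f c‖ * ‖f c‖) := by rw [div_mul_cancel₀ _ hfc'.ne']; gcongr
    _ ≤ 5 ^ N * (M / ‖f c‖ * ((8 / 5) ^ N * ‖g c‖)) := by gcongr
    _ = M / ‖f c‖ * 8 ^ N * ‖g c‖ := by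
        rw [show (8 : ℝ) = 5 * (8 / 5) by norm_num, mul_pow]
        norm_num
        ring
    _ ≤ Real.exp (Real.log (M / ‖f c‖)) * Real.exp (3 * (9 * Real.log (M / ‖f c‖))) * ‖g c‖ := by
        rw [Real.exp_log (by positivity)]
        gcongr
        exact (eight_pow_le_exp N).trans (by gcongr)
    _ = Real.exp (28 * Real.log (M / ‖f c‖)) * ‖g c‖ := by rw [← Real.exp_add]; ring_nf

lemma norm_logDeriv_sub_sum_le (hf : Differentiable ℂ f)
    (hS : ∀ ρ, ρ ∈ S ↔ dist ρ c ≤ 8 / 5 ∧ f ρ = 0) (hfS : ∀ ρ ∈ S, analyticOrderAt f ρ ≠ ⊤)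
    (hM : ∀ z, dist z c = 9 / 5 → ‖f z‖ ≤ M) (hfc : f c ≠ 0) (hz : dist z c ≤ 3 / 2)
    (hfz : f z ≠ 0) :
    ‖logDeriv f z - ∑ ρ ∈ S, (analyticOrderNatAt f ρ : ℂ) / (z - ρ)‖ ≤
      1240 * (28 * Real.log (M / ‖f c‖) + 1) := by
  have hdist : ∀ ρ ∈ S, dist ρ c ≤ 8 / 5 := fun ρ hρ ↦ ((hS ρ).1 hρ).1
  obtain ⟨g, hg, hgS, hfg⟩ := exists_eq_prod_sub_pow_mul hf S hfS
  have hg₀ : ∀ z ∈ ball c (8 / 5), g z ≠ 0 := fun w hw hgw ↦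
    hgS w ((hS w).2 ⟨(mem_ball.1 hw).le, by rw [hfg, hgw, mul_zero]⟩) hgw
  have hlog : 0 ≤ Real.log (M / ‖f c‖) := by
    linarith [sum_order_le hf hfS hdist hM hfc,
      Nat.cast_nonneg (α := ℝ) (∑ ρ ∈ S, analyticOrderNatAt f ρ)]
  have hgrowth : ∀ w ∈ ball c (8 / 5),
      ‖g w‖ ≤ Real.exp (28 * Real.log (M / ‖f c‖) + 1) * ‖g c‖ := fun w hw ↦ by
    refine (norm_cofactor_le_exp_mul_norm hf hfS hdist hM hfc hg hfg
      ((mem_ball.1 hw).le.trans (by norm_num))).trans ?_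
    gcongr
    linarith
  rw [logDeriv_eq_sum_add_of_eq_prod hg hfg (fun h ↦ hfz ((hS z).1 h).2)
    (hg₀ z (mem_ball.2 (hz.trans_lt (by norm_num)))), add_sub_cancel_left]
  refine (norm_logDeriv_le_of_norm_le_exp hg hg₀ (by positivity) hgrowth
    (r₁ := 3 / 2) (r₂ := 31 / 20) (by norm_num) (by norm_num) hz).trans_eq ?_
  ring

end LocalZeros

section LogHeight

variable {s t : ℝ}

/-- The logarithmic weight `log (|t| + 3)`, which measures the density of zeros at height `t` and
is at least `1`. -/
noncomputable def logHeight (t : ℝ) : ℝ := Real.log (|t| + 3)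

lemma one_le_logHeight (t : ℝ) : 1 ≤ logHeight t := by
  rw [logHeight, Real.le_log_iff_exp_le (by positivity)]
  linarith [Real.exp_one_lt_d9, abs_nonneg t]

lemma logHeight_pos (t : ℝ) : 0 < logHeight t := one_pos.trans_le (one_le_logHeight t)

lemma continuous_logHeight : Continuous logHeight :=
  Continuous.log (by fun_prop) fun t ↦ by positivity

lemma logHeight_add_le (s t : ℝ) : logHeight (s + t) ≤ 2 * logHeight s * logHeight t := by
  have hadd : logHeight (s + t) ≤ logHeight s + logHeight t := by
    rw [logHeight, logHeight, logHeight, ← Real.log_mul (by positivity) (by positivity)]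
    refine Real.log_le_log (by positivity) ?_
    nlinarith [abs_add_le s t, abs_nonneg s, abs_nonneg t, mul_nonneg (abs_nonneg s) (abs_nonneg t)]
  nlinarith [one_le_logHeight s, one_le_logHeight t]

lemma logHeight_le_two_mul (h : |s - t| ≤ 1) : logHeight s ≤ 2 * logHeight t := by
  have hlog : logHeight s ≤ Real.log ((|t| + 3) ^ 2) := by
    refine Real.log_le_log (by positivity) ?_
    nlinarith [abs_sub_abs_le_abs_sub s t, abs_nonneg t]
  rw [Real.log_pow] at hlog
  exact_mod_cast hlog

end LogHeight

section ZetaZeros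

variable {s z ρ : ℂ} {t : ℝ} {S : Finset ℂ}

lemma analyticOrderAt_entireZeta_ne_top (z : ℂ) : analyticOrderAt entireZeta z ≠ ⊤ := fun h ↦ by
  have hone : entireZeta 1 = 0 :=
    (differentiable_entireZeta.differentiableOn.analyticOnNhd
      isOpen_univ).eqOn_zero_of_preconnected_of_eventuallyEq_zero
      isPreconnected_univ (Set.mem_univ z) (analyticOrderAt_eq_top.1 h) (Set.mem_univ 1)
  exact one_ne_zero (entireZeta_one.symm.trans hone)

lemma ne_one_of_entireZeta_eq_zero (h : entireZeta s = 0) : s ≠ 1 := by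
  rintro rfl
  exact one_ne_zero (entireZeta_one.symm.trans h)

lemma riemannZeta_eq_zero_of_entireZeta_eq_zero (h : entireZeta s = 0) : riemannZeta s = 0 := by
  have hs := ne_one_of_entireZeta_eq_zero h
  rw [entireZeta_of_ne_one hs] at h
  exact (mul_eq_zero.1 h).resolve_left (sub_ne_zero.2 hs)

lemma re_eq_half_of_entireZeta_eq_zero (hRH : RiemannHypothesis) (h : entireZeta s = 0)
    (hs : 0 < s.re) : s.re = 1 / 2 := by
  refine hRH s (riemannZeta_eq_zero_of_entireZeta_eq_zero h) ?_ (ne_one_of_entireZeta_eq_zero h)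
  rintro ⟨n, rfl⟩
  have hre : (-2 * ((n : ℂ) + 1)).re = -2 * (n + 1) := by simp
  linarith [Nat.cast_nonneg (α := ℝ) n]

lemma finite_entireZeta_zeros (c : ℂ) (R : ℝ) :
    {ρ : ℂ | dist ρ c ≤ R ∧ entireZeta ρ = 0}.Finite :=
  (isCompact_closedBall c R).inter_riemannZetaZeros_finite.subset fun _ hρ ↦
    ⟨hρ.1, mem_riemannZetaZeros.2 (riemannZeta_eq_zero_of_entireZeta_eq_zero hρ.2)⟩

/-- The multiplicity of `ρ` as a zero of `(s - 1) ζ(s)`. -/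
noncomputable def zeroMult (ρ : ℂ) : ℕ := analyticOrderNatAt entireZeta ρ

/-- A zero of `(s - 1) ζ(s)` on the critical line. -/
def IsCriticalZero (ρ : ℂ) : Prop := entireZeta ρ = 0 ∧ ρ.re = 1 / 2

/-- The zeros of `(s - 1) ζ(s)` within `8 / 5` of `2 + it`; the disc reaches past the critical
line but not to the trivial zeros. -/
noncomputable def zerosNear (t : ℝ) : Finset ℂ :=
  (finite_entireZeta_zeros (2 + t * I) (8 / 5)).toFinset

lemma mem_zerosNear : ρ ∈ zerosNear t ↔ dist ρ (2 + t * I) ≤ 8 / 5 ∧ entireZeta ρ = 0 := by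
  simp [zerosNear]

lemma entireZeta_two_add_ne_zero (t : ℝ) : entireZeta (2 + t * I) ≠ 0 := fun h ↦ by
  have hge := norm_entireZeta_ge_of_re_eq_two (s := 2 + t * I) (by simp)
  rw [h, norm_zero] at hge
  norm_num at hge

lemma norm_entireZeta_le_of_dist_eq (hz : dist z (2 + t * I) = 9 / 5) :
    ‖entireZeta z‖ ≤ 50 * (|t| + 5) ^ 2 := by
  have hre := Complex.abs_re_le_norm (z - (2 + t * I))
  have him := Complex.abs_im_le_norm (z - (2 + t * I))
  rw [← dist_eq_norm, hz] at hre him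
  have hre' : |z.re - 2| ≤ 9 / 5 := by simpa using hre
  have him' : |z.im - t| ≤ 9 / 5 := by simpa using him
  rw [abs_le] at hre'
  refine (norm_entireZeta_le (by linarith) (by linarith)).trans ?_
  gcongr 50 * ?_ ^ 2
  linarith [abs_sub_abs_le_abs_sub z.im t]

lemma log_growth_ratio_le (t : ℝ) :
    Real.log (50 * (|t| + 5) ^ 2 / ‖entireZeta (2 + t * I)‖) ≤ 9 * logHeight t := by
  have ht := abs_nonneg t
  have hlow := norm_entireZeta_ge_of_re_eq_two (s := 2 + t * I) (by simp)
  have hpow : 9 * logHeight t = Real.log ((|t| + 3) ^ 9) := by rw [Real.log_pow]; rfl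
  rw [hpow]
  refine Real.log_le_log (by positivity) ?_
  rw [div_le_iff₀ (by linarith)]
  have hfive : |t| + 5 ≤ (|t| + 3) ^ 2 := by nlinarith
  have hbase : (3 : ℝ) ^ 5 ≤ (|t| + 3) ^ 5 := by gcongr; linarith
  calc 50 * (|t| + 5) ^ 2 ≤ 50 * ((|t| + 3) ^ 2) ^ 2 := by gcongr
    _ ≤ 3 ^ 5 * (3 / 10) * ((|t| + 3) ^ 2) ^ 2 := by gcongr; norm_num
    _ ≤ (|t| + 3) ^ 5 * ‖entireZeta (2 + t * I)‖ * ((|t| + 3) ^ 2) ^ 2 := by gcongr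
    _ = (|t| + 3) ^ 9 * ‖entireZeta (2 + t * I)‖ := by ring

lemma sum_zeroMult_zerosNear_le (t : ℝ) :
    ∑ ρ ∈ zerosNear t, (zeroMult ρ : ℝ) ≤ 81 * logHeight t := by
  have h := sum_order_le differentiable_entireZeta
    (fun ρ _ ↦ analyticOrderAt_entireZeta_ne_top ρ) (fun ρ hρ ↦ (mem_zerosNear.1 hρ).1)
    (fun _ ↦ norm_entireZeta_le_of_dist_eq) (entireZeta_two_add_ne_zero t)
  push_cast at h
  exact h.trans (by linarith [log_growth_ratio_le t])

lemma norm_logDeriv_entireZeta_sub_sum_le (hz : dist z (2 + t * I) ≤ 3 / 2)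
    (hz₀ : entireZeta z ≠ 0) :
    ‖logDeriv entireZeta z - ∑ ρ ∈ zerosNear t, (zeroMult ρ : ℂ) / (z - ρ)‖ ≤
      400000 * logHeight t := by
  have h := norm_logDeriv_sub_sum_le differentiable_entireZeta (fun _ ↦ mem_zerosNear)
    (fun ρ _ ↦ analyticOrderAt_entireZeta_ne_top ρ) (fun _ ↦ norm_entireZeta_le_of_dist_eq)
    (entireZeta_two_add_ne_zero t) hz hz₀
  exact h.trans (by linarith [log_growth_ratio_le t, one_le_logHeight t])

lemma mem_zerosNear_of_abs_le (hρ : IsCriticalZero ρ) (ht : |t - ρ.im| ≤ 1 / 2) :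
    ρ ∈ zerosNear t := by
  refine mem_zerosNear.2 ⟨?_, hρ.1⟩
  rw [dist_eq_norm, Complex.norm_eq_sqrt_sq_add_sq, Real.sqrt_le_iff]
  rw [abs_le] at ht
  norm_num [hρ.2]
  nlinarith

lemma sum_zeroMult_mul_indicator_le (hS : ∀ ρ ∈ S, IsCriticalZero ρ) (t : ℝ) :
    ∑ ρ ∈ S, (zeroMult ρ : ℝ) * (Set.Icc (ρ.im - 1 / 2) (ρ.im + 1 / 2)).indicator 1 t ≤
      81 * logHeight t := by
  classical
  refine le_trans ?_ (sum_zeroMult_zerosNear_le t)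
  simp only [Set.indicator_apply, Pi.one_apply, mul_ite, mul_one, mul_zero]
  rw [← Finset.sum_filter]
  refine Finset.sum_le_sum_of_subset_of_nonneg (fun ρ hρ ↦ ?_) fun _ _ _ ↦ Nat.cast_nonneg _
  obtain ⟨hρS, hlow, hhigh⟩ := Finset.mem_filter.1 hρ
  exact mem_zerosNear_of_abs_le (hS ρ hρS) (abs_le.2 ⟨by linarith, by linarith⟩)

lemma sum_zeroMult_mul_le_integral (hS : ∀ ρ ∈ S, IsCriticalZero ρ) {G : ℝ → ℝ} {g : ℂ → ℝ}
    (hG : ∀ t, 0 ≤ G t) (hGc : Continuous G) (hGi : Integrable fun t ↦ G t * logHeight t)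
    (hg : ∀ ρ ∈ S, ∀ t, |t - ρ.im| ≤ 1 / 2 → g ρ ≤ G t) :
    ∑ ρ ∈ S, (zeroMult ρ : ℝ) * g ρ ≤ 81 * ∫ t, G t * logHeight t := by
  let window : ℂ → Set ℝ := fun ρ ↦ Set.Icc (ρ.im - 1 / 2) (ρ.im + 1 / 2)
  have hint : ∀ ρ, Integrable ((window ρ).indicator G) := fun ρ ↦
    (integrable_indicator_iff measurableSet_Icc).2 hGc.continuousOn.integrableOn_Icc
  have hmean : ∀ ρ ∈ S, g ρ ≤ ∫ t, (window ρ).indicator G t := fun ρ hρ ↦ by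
    rw [integral_indicator measurableSet_Icc]
    calc g ρ = ∫ _ in window ρ, g ρ := by norm_num [window]
      _ ≤ ∫ t in window ρ, G t := setIntegral_mono_on (integrableOn_const (by simp [window]))
          hGc.continuousOn.integrableOn_Icc measurableSet_Icc fun t ht ↦
            hg ρ hρ t (abs_le.2 ⟨by linarith [ht.1], by linarith [ht.2]⟩)
  have hpoint : ∀ t, ∑ ρ ∈ S, (zeroMult ρ : ℝ) * (window ρ).indicator G t ≤
      81 * (G t * logHeight t) := fun t ↦ by
    calc ∑ ρ ∈ S, (zeroMult ρ : ℝ) * (window ρ).indicator G t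
        = G t * ∑ ρ ∈ S, (zeroMult ρ : ℝ) * (window ρ).indicator 1 t := by
          simp only [Finset.mul_sum, Set.indicator_apply, Pi.one_apply]
          refine Finset.sum_congr rfl fun ρ _ ↦ ?_
          split_ifs <;> ring
      _ ≤ G t * (81 * logHeight t) := by
          have := hG t
          gcongr
          exact sum_zeroMult_mul_indicator_le hS t
      _ = 81 * (G t * logHeight t) := by ring
  calc ∑ ρ ∈ S, (zeroMult ρ : ℝ) * g ρ
      ≤ ∑ ρ ∈ S, (zeroMult ρ : ℝ) * ∫ t, (window ρ).indicator G t := by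
        gcongr with ρ hρ
        exact hmean ρ hρ
    _ = ∫ t, ∑ ρ ∈ S, (zeroMult ρ : ℝ) * (window ρ).indicator G t := by
        simp only [integral_finsetSum _ fun ρ _ ↦ (hint ρ).const_mul _, integral_const_mul]
    _ ≤ ∫ t, 81 * (G t * logHeight t) :=
        integral_mono (integrable_finsetSum _ fun ρ _ ↦ (hint ρ).const_mul _)
          (hGi.const_mul _) hpoint
    _ = 81 * ∫ t, G t * logHeight t := integral_const_mul _ _

end ZetaZeros

section Weights

variable {x y s t δ : ℝ} {S : Finset ℂ}

/-- The kernel `1 / (1 + x ^ 2)`, through which a zero is felt at vertical distance `x`. -/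
noncomputable def lorentzian (x : ℝ) : ℝ := 1 / (1 + x ^ 2)

/-- The size `δ / (1 + δ |t|)`, comparable to `min δ |t|⁻¹`, of `((1 + δ) ^ s - 1) / s` at
height `t`. -/
noncomputable def weight (δ t : ℝ) : ℝ := δ / (1 + δ * |t|)

lemma lorentzian_pos (x : ℝ) : 0 < lorentzian x := by unfold lorentzian; positivity

lemma lorentzian_neg (x : ℝ) : lorentzian (-x) = lorentzian x := by simp [lorentzian]

lemma continuous_lorentzian : Continuous lorentzian :=
  Continuous.div (by fun_prop) (by fun_prop) fun x ↦ by positivity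

lemma lorentzian_le_three_mul (h : |x - y| ≤ 1) : lorentzian x ≤ 3 * lorentzian y := by
  rw [lorentzian, lorentzian, mul_one_div, div_le_div_iff₀ (by positivity) (by positivity)]
  nlinarith [(sq_le_one_iff_abs_le_one _).2 h, sq_nonneg (2 * x - y)]

lemma weight_pos (hδ : 0 < δ) (t : ℝ) : 0 < weight δ t := by unfold weight; positivity

lemma continuous_weight (hδ : 0 < δ) : Continuous (weight δ) :=
  Continuous.div (by fun_prop) (by fun_prop) fun x ↦ by positivity

lemma weight_le_two_mul (hδ : 0 < δ) (hδ₁ : δ ≤ 1) (h : |s - t| ≤ 1) :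
    weight δ s ≤ 2 * weight δ t := by
  have habs : |t| ≤ |s| + 1 := by
    linarith [abs_sub_abs_le_abs_sub t s, (abs_sub_comm t s).trans_le h]
  have hmul : δ * |t| ≤ δ * |s| + 1 := by nlinarith
  rw [weight, weight, mul_div_assoc', div_le_div_iff₀ (by positivity) (by positivity)]
  nlinarith [show 0 ≤ δ * |s| by positivity]

lemma weight_le_inv (hδ : 0 < δ) (hδ₁ : δ ≤ 1) (t : ℝ) : weight δ t ≤ 1 / (1 + |t|) := by
  rw [weight, div_le_div_iff₀ (by positivity) (by positivity)]
  nlinarith [abs_nonneg t]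

lemma logHeight_sq_le (t : ℝ) : logHeight t ^ 2 ≤ 48 * (1 + |t|) ^ (1 / 2 : ℝ) := by
  have hlog : logHeight t ≤ (|t| + 3) ^ (1 / 4 : ℝ) / (1 / 4) :=
    Real.log_le_rpow_div (by positivity) (by norm_num)
  have hnine : (9 : ℝ) ^ (1 / 2 : ℝ) = 3 := by
    rw [← Real.sqrt_eq_rpow, show (9 : ℝ) = 3 ^ 2 by norm_num, Real.sqrt_sq (by norm_num)]
  calc logHeight t ^ 2 ≤ ((|t| + 3) ^ (1 / 4 : ℝ) / (1 / 4)) ^ 2 := by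
        have := logHeight_pos t
        gcongr
    _ = 16 * (|t| + 3) ^ (1 / 2 : ℝ) := by
        rw [div_pow, ← Real.rpow_mul_natCast (by positivity)]
        norm_num
        ring
    _ ≤ 16 * (9 * (1 + |t|)) ^ (1 / 2 : ℝ) := by
        gcongr
        linarith [abs_nonneg t]
    _ = 48 * (1 + |t|) ^ (1 / 2 : ℝ) := by
        rw [Real.mul_rpow (by norm_num) (by positivity), hnine]
        ring

lemma integrable_logHeight_sq_div :
    Integrable fun t : ℝ ↦ logHeight t ^ 2 / (1 + |t|) ^ 2 := by
  have hdom := (integrable_one_add_norm (E := ℝ) (μ := volume) (r := 3 / 2)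
    (by simp; norm_num)).const_mul 48
  refine hdom.mono' (Continuous.div (continuous_logHeight.pow 2) (by fun_prop)
    fun v ↦ by positivity).aestronglyMeasurable (.of_forall fun t ↦ ?_)
  rw [Real.norm_of_nonneg (by positivity), Real.norm_eq_abs, div_le_iff₀ (by positivity)]
  refine (logHeight_sq_le t).trans_eq ?_
  rw [mul_assoc, ← Real.rpow_natCast, ← Real.rpow_add (by positivity)]
  norm_num

/-- The absolute constant `∫ log² (|t| + 3) / (1 + |t|)² dt` in which all mean values are
expressed. -/
noncomputable def logMoment : ℝ := ∫ t : ℝ, logHeight t ^ 2 / (1 + |t|) ^ 2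

lemma logMoment_nonneg : 0 ≤ logMoment := integral_nonneg fun t ↦ by positivity

lemma lorentzian_mul_logHeight_le (t : ℝ) :
    lorentzian t * logHeight t ≤ 2 * (logHeight t ^ 2 / (1 + |t|) ^ 2) := by
  have hlog := one_le_logHeight t
  have hsq : (1 + |t|) ^ 2 ≤ 2 * (1 + t ^ 2) := by nlinarith [sq_nonneg (1 - |t|), sq_abs t]
  rw [lorentzian, one_div_mul_eq_div, mul_div_assoc',
    div_le_div_iff₀ (by positivity) (by positivity)]
  calc logHeight t * (1 + |t|) ^ 2 ≤ logHeight t ^ 2 * (2 * (1 + t ^ 2)) := by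
        gcongr
        nlinarith
    _ = 2 * logHeight t ^ 2 * (1 + t ^ 2) := by ring

lemma integrable_lorentzian_mul_logHeight :
    Integrable fun t ↦ lorentzian t * logHeight t := by
  refine (integrable_logHeight_sq_div.const_mul 2).mono'
    (continuous_lorentzian.mul continuous_logHeight).aestronglyMeasurable (.of_forall fun t ↦ ?_)
  rw [Real.norm_of_nonneg (mul_nonneg (lorentzian_pos t).le (logHeight_pos t).le)]
  exact lorentzian_mul_logHeight_le t

lemma lorentzian_sub_mul_logHeight_le (s t : ℝ) : lorentzian (t - s) * logHeight t ≤
    2 * logHeight s * (lorentzian (t - s) * logHeight (t - s)) := by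
  have hlog := logHeight_add_le (t - s) s
  rw [sub_add_cancel] at hlog
  have := mul_le_mul_of_nonneg_left hlog (lorentzian_pos (t - s)).le
  linarith

lemma integrable_lorentzian_sub_mul_logHeight (s : ℝ) :
    Integrable fun t ↦ lorentzian (t - s) * logHeight t := by
  refine ((integrable_lorentzian_mul_logHeight.comp_sub_right s).const_mul (2 * logHeight s)).mono'
    ((continuous_lorentzian.comp (by fun_prop)).mul continuous_logHeight).aestronglyMeasurable
    (.of_forall fun t ↦ ?_)
  rw [Real.norm_of_nonneg (mul_nonneg (lorentzian_pos _).le (logHeight_pos t).le)]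
  exact lorentzian_sub_mul_logHeight_le s t

lemma integral_lorentzian_sub_mul_logHeight_le (s : ℝ) :
    ∫ t, lorentzian (t - s) * logHeight t ≤ 4 * logMoment * logHeight s := by
  have hs := logHeight_pos s
  have hmoment : ∫ t, lorentzian t * logHeight t ≤ 2 * logMoment := by
    rw [logMoment, ← integral_const_mul]
    exact integral_mono integrable_lorentzian_mul_logHeight
      (integrable_logHeight_sq_div.const_mul 2) lorentzian_mul_logHeight_le
  calc ∫ t, lorentzian (t - s) * logHeight t
      ≤ ∫ t, 2 * logHeight s * (lorentzian (t - s) * logHeight (t - s)) :=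
        integral_mono (integrable_lorentzian_sub_mul_logHeight s)
          ((integrable_lorentzian_mul_logHeight.comp_sub_right s).const_mul _)
          (lorentzian_sub_mul_logHeight_le s)
    _ = 2 * logHeight s * ∫ u, lorentzian u * logHeight u := by
        rw [integral_const_mul,
          integral_sub_right_eq_self (fun u ↦ lorentzian u * logHeight u)]
    _ ≤ 2 * logHeight s * (2 * logMoment) := by gcongr
    _ = 4 * logMoment * logHeight s := by ring

lemma sum_zeroMult_mul_lorentzian_le (hS : ∀ ρ ∈ S, IsCriticalZero ρ) (t : ℝ) :
    ∑ ρ ∈ S, (zeroMult ρ : ℝ) * lorentzian (t - ρ.im) ≤ 972 * logMoment * logHeight t := by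
  have hnear : ∀ ρ ∈ S, ∀ τ, |τ - ρ.im| ≤ 1 / 2 →
      lorentzian (t - ρ.im) ≤ 3 * lorentzian (τ - t) := fun ρ _ τ hτ ↦ by
    rw [← lorentzian_neg (τ - t)]
    exact lorentzian_le_three_mul (by ring_nf; rw [add_comm, ← sub_eq_add_neg]; linarith)
  have hpos : ∀ τ, 0 ≤ 3 * lorentzian (τ - t) := fun τ ↦
    mul_nonneg (by norm_num) (lorentzian_pos _).le
  refine (sum_zeroMult_mul_le_integral hS hpos
    (continuous_const.mul (continuous_lorentzian.comp (by fun_prop)))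
    (by simpa only [mul_assoc] using (integrable_lorentzian_sub_mul_logHeight t).const_mul 3)
    hnear).trans ?_
  simp only [mul_assoc, integral_const_mul]
  linarith [integral_lorentzian_sub_mul_logHeight_le t]

lemma integrable_weight_sq_mul_logHeight_sq (hδ : 0 < δ) (hδ₁ : δ ≤ 1) :
    Integrable fun t ↦ weight δ t ^ 2 * logHeight t ^ 2 := by
  refine integrable_logHeight_sq_div.mono' ((continuous_weight hδ).pow 2 |>.mul
    (continuous_logHeight.pow 2)).aestronglyMeasurable (.of_forall fun t ↦ ?_)
  have hw := (weight_pos hδ t).le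
  rw [Real.norm_of_nonneg (by positivity)]
  calc weight δ t ^ 2 * logHeight t ^ 2 ≤ (1 / (1 + |t|)) ^ 2 * logHeight t ^ 2 := by
        gcongr
        exact weight_le_inv hδ hδ₁ t
    _ = logHeight t ^ 2 / (1 + |t|) ^ 2 := by rw [div_pow]; ring

lemma logHeight_inv_mul_le (hδ : 0 < δ) (hδ₁ : δ ≤ 1) (t : ℝ) :
    logHeight (δ⁻¹ * t) ≤ 2 * Real.log (2 / δ) * logHeight t := by
  have hinv : 1 ≤ δ⁻¹ := (one_le_inv₀ hδ).2 hδ₁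
  have hlog : 0 ≤ Real.log δ⁻¹ := Real.log_nonneg hinv
  have hadd : logHeight (δ⁻¹ * t) ≤ Real.log δ⁻¹ + logHeight t := by
    rw [logHeight, logHeight, ← Real.log_mul (by positivity) (by positivity), abs_mul,
      abs_of_pos (inv_pos.2 hδ)]
    refine Real.log_le_log (by positivity) ?_
    linarith
  have htwo : 1 + Real.log δ⁻¹ ≤ 2 * Real.log (2 / δ) := by
    rw [div_eq_mul_inv, Real.log_mul (by norm_num) (by positivity)]
    linarith [Real.log_two_gt_d9]
  nlinarith [one_le_logHeight t]

lemma integral_weight_sq_mul_logHeight_sq_le (hδ : 0 < δ) (hδ₁ : δ ≤ 1) :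
    ∫ t, weight δ t ^ 2 * logHeight t ^ 2 ≤ 4 * logMoment * (δ * Real.log (2 / δ) ^ 2) := by
  have hscale : ∫ t, weight δ t ^ 2 * logHeight t ^ 2 =
      δ⁻¹ * ∫ t, weight δ (δ⁻¹ * t) ^ 2 * logHeight (δ⁻¹ * t) ^ 2 := by
    rw [Measure.integral_comp_mul_left (fun t ↦ weight δ t ^ 2 * logHeight t ^ 2) δ⁻¹, inv_inv,
      abs_of_pos hδ, smul_eq_mul, inv_mul_cancel_left₀ hδ.ne']
  have hweight : ∀ t, weight δ (δ⁻¹ * t) = δ / (1 + |t|) := fun t ↦ by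
    rw [weight, abs_mul, abs_of_pos (inv_pos.2 hδ), mul_inv_cancel_left₀ hδ.ne']
  have hpoint : ∀ t, weight δ (δ⁻¹ * t) ^ 2 * logHeight (δ⁻¹ * t) ^ 2 ≤
      4 * δ ^ 2 * Real.log (2 / δ) ^ 2 * (logHeight t ^ 2 / (1 + |t|) ^ 2) := fun t ↦ by
    have hpos := (logHeight_pos (δ⁻¹ * t)).le
    calc weight δ (δ⁻¹ * t) ^ 2 * logHeight (δ⁻¹ * t) ^ 2
        ≤ (δ / (1 + |t|)) ^ 2 * (2 * Real.log (2 / δ) * logHeight t) ^ 2 := by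
          rw [hweight]
          gcongr
          exact logHeight_inv_mul_le hδ hδ₁ t
      _ = _ := by rw [div_pow]; ring
  calc ∫ t, weight δ t ^ 2 * logHeight t ^ 2
      ≤ δ⁻¹ * ∫ t, 4 * δ ^ 2 * Real.log (2 / δ) ^ 2 * (logHeight t ^ 2 / (1 + |t|) ^ 2) := by
        rw [hscale]
        exact mul_le_mul_of_nonneg_left (integral_mono
          ((integrable_weight_sq_mul_logHeight_sq hδ hδ₁).comp_mul_left' (inv_ne_zero hδ.ne'))
          (integrable_logHeight_sq_div.const_mul _) hpoint) (by positivity)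
    _ = 4 * logMoment * (δ * Real.log (2 / δ) ^ 2) := by
        rw [integral_const_mul, ← logMoment]
        field_simp

lemma sum_zeroMult_mul_weight_sq_le (hS : ∀ ρ ∈ S, IsCriticalZero ρ) (hδ : 0 < δ) (hδ₁ : δ ≤ 1) :
    ∑ ρ ∈ S, (zeroMult ρ : ℝ) * (weight δ ρ.im ^ 2 * logHeight ρ.im) ≤
      2592 * logMoment * (δ * Real.log (2 / δ) ^ 2) := by
  have hsq : ∀ t, 8 * (weight δ t ^ 2 * logHeight t) * logHeight t =
      8 * (weight δ t ^ 2 * logHeight t ^ 2) := fun t ↦ by ring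
  have hnear : ∀ ρ ∈ S, ∀ t, |t - ρ.im| ≤ 1 / 2 →
      weight δ ρ.im ^ 2 * logHeight ρ.im ≤ 8 * (weight δ t ^ 2 * logHeight t) := fun ρ _ t ht ↦ by
    have hdist : |ρ.im - t| ≤ 1 := by rw [abs_sub_comm]; linarith
    have hw := (weight_pos hδ ρ.im).le
    have hl := (logHeight_pos ρ.im).le
    calc weight δ ρ.im ^ 2 * logHeight ρ.im ≤ (2 * weight δ t) ^ 2 * (2 * logHeight t) := by
          gcongr
          · exact weight_le_two_mul hδ hδ₁ hdist
          · exact logHeight_le_two_mul hdist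
      _ = 8 * (weight δ t ^ 2 * logHeight t) := by ring
  refine (sum_zeroMult_mul_le_integral hS
    (fun t ↦ mul_nonneg (by norm_num) (mul_nonneg (sq_nonneg _) (logHeight_pos t).le))
    (continuous_const.mul (((continuous_weight hδ).pow 2).mul continuous_logHeight))
    (by simpa only [hsq] using (integrable_weight_sq_mul_logHeight_sq hδ hδ₁).const_mul 8)
    hnear).trans ?_
  simp only [hsq, integral_const_mul]
  linarith [integral_weight_sq_mul_logHeight_sq_le hδ hδ₁]

end Weights

section ShortKernel

variable {δ : ℝ} {s w : ℂ}

/-- The multiplier `((1 + δ) ^ s - 1) / s` that turns `x ^ s / s` into its increment over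
`[x, (1 + δ) x]`. -/
noncomputable def shortKernel (δ : ℝ) (s : ℂ) : ℂ := (Complex.exp (Real.log (1 + δ) * s) - 1) / s

lemma ne_zero_of_re_mem_Icc (hs : s.re ∈ Set.Icc (1 / 2) 2) : s ≠ 0 := by
  rintro rfl
  norm_num at hs

lemma log_one_add_nonneg (hδ : 0 < δ) : 0 ≤ Real.log (1 + δ) := Real.log_nonneg (by linarith)

lemma norm_exp_log_one_add_mul_le (hδ : 0 < δ) (hδ₁ : δ ≤ 1) (hs : s.re ≤ 2) :
    ‖Complex.exp (Real.log (1 + δ) * s)‖ ≤ 4 := by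
  rw [Complex.norm_exp, Complex.re_ofReal_mul]
  calc Real.exp (Real.log (1 + δ) * s.re) ≤ Real.exp (Real.log (1 + δ) * 2) := by
        have := log_one_add_nonneg hδ
        gcongr
    _ = (1 + δ) ^ 2 := by
        rw [← Real.rpow_def_of_pos (by linarith), ← Real.rpow_natCast]
        norm_num
    _ ≤ 4 := by nlinarith

lemma norm_exp_log_one_add_mul_sub_le (hδ : 0 < δ) (hδ₁ : δ ≤ 1) (hs : s.re ≤ 2) (hw : w.re ≤ 2) :
    ‖Complex.exp (Real.log (1 + δ) * s) - Complex.exp (Real.log (1 + δ) * w)‖ ≤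
      4 * δ * ‖s - w‖ := by
  have hlog : Real.log (1 + δ) ≤ δ := by
    linarith [Real.log_le_sub_one_of_pos (x := 1 + δ) (by linarith)]
  refine (convex_halfSpace_re_le 2).norm_image_sub_le_of_norm_hasDerivWithin_le (𝕜 := ℂ)
    (f := fun z ↦ Complex.exp (Real.log (1 + δ) * z))
    (fun z _ ↦ ((hasDerivAt_id z).const_mul (Real.log (1 + δ) : ℂ)).cexp.hasDerivWithinAt)
    (fun z hz ↦ ?_) hw hs
  rw [norm_mul, mul_one, Complex.norm_real, Real.norm_of_nonneg (log_one_add_nonneg hδ)]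
  exact mul_le_mul (norm_exp_log_one_add_mul_le hδ hδ₁ hz) hlog (log_one_add_nonneg hδ)
    (by norm_num)

lemma mul_shortKernel (hs : s ≠ 0) :
    s * shortKernel δ s = Complex.exp (Real.log (1 + δ) * s) - 1 :=
  mul_div_cancel₀ _ hs

lemma norm_shortKernel_le (hδ : 0 < δ) (hδ₁ : δ ≤ 1) (hs : s.re ∈ Set.Icc (1 / 2) 2) :
    ‖shortKernel δ s‖ ≤ 4 * δ := by
  have h := norm_exp_log_one_add_mul_sub_le hδ hδ₁ hs.2 (w := 0) (by simp)
  rw [mul_zero, Complex.exp_zero, sub_zero] at h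
  rwa [shortKernel, norm_div, div_le_iff₀ (norm_pos_iff.2 (ne_zero_of_re_mem_Icc hs))]

lemma norm_shortKernel_le_weight (hδ : 0 < δ) (hδ₁ : δ ≤ 1) (hs : s.re ∈ Set.Icc (1 / 2) 2) :
    ‖shortKernel δ s‖ ≤ 9 * weight δ s.im := by
  have him : |s.im| * ‖shortKernel δ s‖ ≤ 5 := by
    calc |s.im| * ‖shortKernel δ s‖ ≤ ‖s‖ * ‖shortKernel δ s‖ := by
          gcongr
          exact Complex.abs_im_le_norm s
      _ = ‖Complex.exp (Real.log (1 + δ) * s) - 1‖ := by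
          rw [← norm_mul, mul_shortKernel (ne_zero_of_re_mem_Icc hs)]
      _ ≤ 4 + ‖(1 : ℂ)‖ := (norm_sub_le _ _).trans
          (by gcongr; exact norm_exp_log_one_add_mul_le hδ hδ₁ hs.2)
      _ = 5 := by norm_num
  rw [weight, mul_div_assoc', le_div_iff₀ (by positivity)]
  nlinarith [norm_shortKernel_le hδ hδ₁ hs]

lemma norm_mul_norm_shortKernel_sub_le (hδ : 0 < δ) (hδ₁ : δ ≤ 1)
    (hs : s.re ∈ Set.Icc (1 / 2) 2) (hw : w.re ∈ Set.Icc (1 / 2) 2) :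
    ‖s‖ * ‖shortKernel δ s - shortKernel δ w‖ ≤ 8 * δ * ‖s - w‖ := by
  have hsplit : s * (shortKernel δ s - shortKernel δ w) =
      (Complex.exp (Real.log (1 + δ) * s) - Complex.exp (Real.log (1 + δ) * w)) -
        (s - w) * shortKernel δ w := by
    linear_combination mul_shortKernel (δ := δ) (ne_zero_of_re_mem_Icc hs) -
      mul_shortKernel (δ := δ) (ne_zero_of_re_mem_Icc hw)
  rw [← norm_mul, hsplit]
  refine (norm_sub_le _ _).trans ?_
  rw [norm_mul]
  nlinarith [norm_exp_log_one_add_mul_sub_le hδ hδ₁ hs.2 hw.2, norm_shortKernel_le hδ hδ₁ hw,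
    norm_nonneg (s - w)]

lemma norm_shortKernel_sub_le (hδ : 0 < δ) (hδ₁ : δ ≤ 1) (hs : s.re ∈ Set.Icc (1 / 2) 2)
    (hw : w.re ∈ Set.Icc (1 / 2) 2) :
    ‖shortKernel δ s - shortKernel δ w‖ ≤ 24 * weight δ s.im * ‖s - w‖ := by
  have hnorm : 1 + δ * |s.im| ≤ 3 * ‖s‖ := by
    nlinarith [Complex.abs_im_le_norm s, Complex.re_le_norm s, abs_nonneg s.im, hs.1]
  rw [weight, mul_div_assoc', div_mul_eq_mul_div, le_div_iff₀ (by positivity)]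
  calc ‖shortKernel δ s - shortKernel δ w‖ * (1 + δ * |s.im|)
      ≤ ‖shortKernel δ s - shortKernel δ w‖ * (3 * ‖s‖) := by gcongr
    _ = 3 * (‖s‖ * ‖shortKernel δ s - shortKernel δ w‖) := by ring
    _ ≤ 3 * (8 * δ * ‖s - w‖) :=
      mul_le_mul_of_nonneg_left (norm_mul_norm_shortKernel_sub_le hδ hδ₁ hs hw) (by norm_num)
    _ = 24 * δ * ‖s - w‖ := by ring

lemma shortKernel_one (hδ : 0 < δ) : shortKernel δ 1 = δ := by
  rw [shortKernel, mul_one, div_one, ← Complex.ofReal_exp, Real.exp_log (by linarith)]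
  push_cast
  ring

lemma differentiableAt_shortKernel (hs : s ≠ 0) : DifferentiableAt ℂ (shortKernel δ) s :=
  DifferentiableAt.div (by fun_prop) (by fun_prop) hs

lemma norm_dslope_shortKernel_le (hδ : 0 < δ) (hδ₁ : δ ≤ 1) (hs : s.re ∈ Set.Icc (1 / 2) 2) :
    ‖dslope (shortKernel δ) 1 s‖ ≤ 24 * weight δ s.im := by
  have hone : (1 : ℂ).re ∈ Set.Icc (1 / 2) 2 := by norm_num
  rcases eq_or_ne s 1 with rfl | hne
  · rw [dslope_same, show weight δ (1 : ℂ).im = δ by simp [weight]]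
    refine norm_deriv_le_of_lip' (by positivity) ?_
    have hstrip : Complex.re ⁻¹' Set.Ioo (1 / 2) 2 ∈ 𝓝 (1 : ℂ) :=
      (isOpen_Ioo.preimage Complex.continuous_re).mem_nhds (by norm_num)
    filter_upwards [hstrip] with z hz
    refine (norm_shortKernel_sub_le hδ hδ₁ (Set.Ioo_subset_Icc_self hz) hone).trans ?_
    gcongr
    exact div_le_self hδ.le (by linarith [mul_nonneg hδ.le (abs_nonneg z.im)])
  · rw [dslope_of_ne _ hne, slope_def_module, norm_smul, norm_inv,
      inv_mul_le_iff₀ (norm_pos_iff.2 (sub_ne_zero.2 hne)), mul_comm]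
    exact norm_shortKernel_sub_le hδ hδ₁ hs hone

lemma differentiableAt_dslope_shortKernel (hs : 0 < s.re) :
    DifferentiableAt ℂ (dslope (shortKernel δ) 1) s := by
  have hopen : IsOpen {z : ℂ | 0 < z.re} := isOpen_lt continuous_const Complex.continuous_re
  refine DifferentiableOn.differentiableAt ?_ (hopen.mem_nhds hs)
  refine (Complex.differentiableOn_dslope (hopen.mem_nhds (by simp))).2 fun z hz ↦
    (differentiableAt_shortKernel ?_).differentiableWithinAt
  rintro rfl
  simp at hz

lemma dslope_shortKernel_of_ne (hδ : 0 < δ) (hs : s ≠ 1) :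
    dslope (shortKernel δ) 1 s = (shortKernel δ s - δ) / (s - 1) := by
  rw [dslope_of_ne _ hs, slope_def_field, shortKernel_one hδ]

end ShortKernel

/-- `f` has the absolutely convergent Laplace transform `L` at `s`. -/
structure HasLaplace (f : ℝ → ℂ) (s L : ℂ) : Prop where
  integrable : Integrable fun u : ℝ ↦ f u * Complex.exp (-(s * u))
  laplace_eq : laplace f s = L

section HasLaplace

variable {ι : Type*} {f g : ℝ → ℂ} {s a b : ℂ}

lemma HasLaplace.add (hf : HasLaplace f s a) (hg : HasLaplace g s b) :
    HasLaplace (fun u ↦ f u + g u) s (a + b) where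
  integrable := by
    simp only [add_mul]
    exact hf.integrable.add hg.integrable
  laplace_eq := by
    simp only [← hf.laplace_eq, ← hg.laplace_eq, laplace, add_mul]
    exact integral_add hf.integrable hg.integrable

lemma HasLaplace.const_mul (c : ℂ) (hf : HasLaplace f s a) :
    HasLaplace (fun u ↦ c * f u) s (c * a) where
  integrable := by simpa only [mul_assoc] using hf.integrable.const_mul c
  laplace_eq := by simp only [← hf.laplace_eq, laplace, mul_assoc, integral_const_mul]

lemma HasLaplace.sub (hf : HasLaplace f s a) (hg : HasLaplace g s b) :
    HasLaplace (fun u ↦ f u - g u) s (a - b) := by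
  simpa only [neg_one_mul, ← sub_eq_add_neg] using hf.add (hg.const_mul (-1))

lemma HasLaplace.sum {S : Finset ι} {f : ι → ℝ → ℂ} {a : ι → ℂ}
    (hf : ∀ i ∈ S, HasLaplace (f i) s (a i)) :
    HasLaplace (fun u ↦ ∑ i ∈ S, f i u) s (∑ i ∈ S, a i) where
  integrable := by
    simpa only [Finset.sum_mul] using integrable_finsetSum S fun i hi ↦ (hf i hi).integrable
  laplace_eq := by
    simp only [laplace, Finset.sum_mul]
    rw [integral_finsetSum S fun i hi ↦ (hf i hi).integrable]
    exact Finset.sum_congr rfl fun i hi ↦ (hf i hi).laplace_eq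

lemma HasLaplace.comp_add_right (hf : HasLaplace f s a) (c : ℝ) :
    HasLaplace (fun u ↦ f (u + c)) s (Complex.exp (c * s) * a) := by
  have hshift (u : ℝ) : f (u + c) * Complex.exp (-(s * u)) =
      Complex.exp (c * s) * (f (u + c) * Complex.exp (-(s * (u + c : ℝ)))) := by
    rw [mul_left_comm, ← Complex.exp_add]
    push_cast
    ring_nf
  refine ⟨?_, ?_⟩
  · simp only [hshift]
    exact (hf.integrable.comp_add_right c).const_mul _
  · simp only [laplace, hshift]
    rw [integral_const_mul,
      integral_add_right_eq_self fun u : ℝ ↦ f u * Complex.exp (-(s * u))]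
    exact congrArg _ hf.laplace_eq

end HasLaplace

section CausalExp

variable {a s : ℂ} {u : ℝ}

/-- The exponential `e^{au}` cut off to `u ≥ 0`. -/
noncomputable def causalExp (a : ℂ) : ℝ → ℂ :=
  (Set.Ici 0).indicator fun u : ℝ ↦ Complex.exp (a * u)

lemma causalExp_of_neg (hu : u < 0) : causalExp a u = 0 :=
  Set.indicator_of_notMem (by simpa using hu) _

lemma causalExp_of_nonneg (hu : 0 ≤ u) : causalExp a u = Complex.exp (a * u) :=
  Set.indicator_of_mem (by simpa using hu) _

lemma measurable_causalExp (a : ℂ) : Measurable (causalExp a) :=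
  Measurable.indicator (by fun_prop) measurableSet_Ici

lemma norm_causalExp_le (ha : a.re ≤ 1) (hu : 0 ≤ u) : ‖causalExp a u‖ ≤ Real.exp u := by
  rw [causalExp_of_nonneg hu, Complex.norm_exp, Complex.re_mul_ofReal, Real.exp_le_exp]
  exact mul_le_of_le_one_left hu ha

lemma hasLaplace_causalExp (h : a.re < s.re) : HasLaplace (causalExp a) s (1 / (s - a)) := by
  have hprod : (fun u : ℝ ↦ causalExp a u * Complex.exp (-(s * u))) =
      (Set.Ici 0).indicator fun u : ℝ ↦ Complex.exp ((a - s) * u) := by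
    ext u
    rcases lt_or_ge u 0 with hu | hu
    · rw [causalExp_of_neg hu, Set.indicator_of_notMem (by simpa using hu), zero_mul]
    · rw [causalExp_of_nonneg hu, Set.indicator_of_mem (by simpa using hu), ← Complex.exp_add]
      ring_nf
  have hre : (a - s).re < 0 := by simpa using h
  refine ⟨?_, ?_⟩
  · rw [hprod, integrable_indicator_iff measurableSet_Ici, integrableOn_Ici_iff_integrableOn_Ioi]
    exact integrableOn_exp_mul_complex_Ioi hre 0
  · rw [laplace, hprod, integral_indicator measurableSet_Ici, integral_Ici_eq_integral_Ioi,
      integral_exp_mul_complex_Ioi hre, Complex.ofReal_zero, mul_zero, Complex.exp_zero,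
      ← neg_sub s a, neg_div_neg_eq]

end CausalExp

section PsiExp

variable {s : ℂ} {u : ℝ}

lemma chebyshevPsi_eq_psi (x : ℝ) : chebyshevPsi x = Chebyshev.psi x := by
  rw [Chebyshev.psi_eq_sum_Icc, chebyshevPsi, Nat.range_succ_eq_Icc_zero]

/-- `ψ(e^u)`, as a complex number. -/
noncomputable def psiExp (u : ℝ) : ℂ := Chebyshev.psi (Real.exp u)

lemma psiExp_of_lt (hu : Real.exp u < 2) : psiExp u = 0 := by
  rw [psiExp, Chebyshev.psi_eq_zero_of_lt_two hu, Complex.ofReal_zero]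

lemma psiExp_of_neg (hu : u < 0) : psiExp u = 0 :=
  psiExp_of_lt (by linarith [Real.exp_lt_one_iff.2 hu])

lemma measurable_psiExp : Measurable psiExp :=
  Complex.measurable_ofReal.comp (Chebyshev.psi_mono.measurable.comp Real.measurable_exp)

lemma norm_psiExp_le (u : ℝ) : ‖psiExp u‖ ≤ (Real.log 4 + 4) * Real.exp u := by
  rw [psiExp, Complex.norm_real, Real.norm_of_nonneg (Chebyshev.psi_nonneg _)]
  exact Chebyshev.psi_le_const_mul_self (Real.exp_pos u).le

lemma integrable_psiExp_mul_exp (hs : 1 < s.re) :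
    Integrable fun u : ℝ ↦ psiExp u * Complex.exp (-(s * u)) := by
  have htilt : Integrable (tilt s.re psiExp) :=
    integrable_tilt measurable_psiExp (fun u ↦ psiExp_of_neg)
      (fun u _ ↦ by simpa only [one_mul] using norm_psiExp_le u) hs
  refine htilt.norm.mono' (measurable_psiExp.mul (by fun_prop)).aestronglyMeasurable
    (ae_of_all _ fun u ↦ ?_)
  rw [norm_tilt, norm_mul, Complex.norm_exp, Complex.neg_re, Complex.re_mul_ofReal]

lemma setIntegral_Ioi_one_eq (f : ℝ → ℂ) :
    ∫ x in Set.Ioi 1, f x = ∫ u in Set.Ioi 0, Real.exp u * f (Real.exp u) := by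
  rw [← Real.exp_zero, ← Real.image_exp_Ioi, integral_image_eq_integral_abs_deriv_smul
    measurableSet_Ioi (fun x _ ↦ (Real.hasDerivAt_exp x).hasDerivWithinAt)
    Real.exp_injective.injOn]
  simp only [abs_of_pos (Real.exp_pos _), Complex.real_smul]

lemma neg_logDeriv_riemannZeta_eq_mul_integral (hs : 1 < s.re) :
    -(deriv riemannZeta s / riemannZeta s) =
      s * ∫ x in Set.Ioi (1 : ℝ), (Chebyshev.psi x : ℂ) * (x : ℂ) ^ (-(s + 1)) := by
  have hgrowth : (fun n : ℕ ↦ ∑ k ∈ Finset.Icc 1 n, ArithmeticFunction.vonMangoldt k)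
      =O[atTop] fun n ↦ (n : ℝ) ^ (1 : ℝ) := by
    refine Asymptotics.IsBigO.of_bound (Real.log 4 + 4) (Eventually.of_forall fun n ↦ ?_)
    have hpsi : ∑ k ∈ Finset.Icc 1 n, ArithmeticFunction.vonMangoldt k = Chebyshev.psi n := by
      rw [Chebyshev.psi, Nat.floor_natCast]
      rfl
    rw [hpsi, Real.rpow_one, Real.norm_of_nonneg (Chebyshev.psi_nonneg _),
      Real.norm_of_nonneg (by positivity)]
    exact Chebyshev.psi_le_const_mul_self (by positivity)
  rw [← neg_div, ← ArithmeticFunction.LSeries_vonMangoldt_eq_deriv_riemannZeta_div hs,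
    LSeries_eq_mul_integral_of_nonneg _ zero_le_one hs hgrowth
      fun _ ↦ ArithmeticFunction.vonMangoldt_nonneg]
  simp only [Chebyshev.psi, Complex.ofReal_sum]
  rfl

lemma hasLaplace_psiExp (hs : 1 < s.re) :
    HasLaplace psiExp s (-(deriv riemannZeta s / riemannZeta s) / s) := by
  refine ⟨integrable_psiExp_mul_exp hs, ?_⟩
  have hs₀ : s ≠ 0 := by rintro rfl; norm_num at hs
  have hsupp : laplace psiExp s = ∫ u in Set.Ioi (0 : ℝ), psiExp u * Complex.exp (-(s * u)) := by
    rw [laplace, ← integral_Ici_eq_integral_Ioi]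
    refine (setIntegral_eq_integral_of_forall_compl_eq_zero fun u hu ↦ ?_).symm
    rw [psiExp_of_neg (by simpa using hu), zero_mul]
  rw [hsupp, neg_logDeriv_riemannZeta_eq_mul_integral hs, mul_div_cancel_left₀ _ hs₀,
    setIntegral_Ioi_one_eq]
  refine integral_congr_ae (ae_of_all _ fun u ↦ ?_)
  dsimp only [psiExp]
  rw [Complex.cpow_def_of_ne_zero (by exact_mod_cast (Real.exp_pos u).ne'),
    ← Complex.ofReal_log (Real.exp_pos u).le, Real.log_exp, mul_left_comm, Complex.ofReal_exp,
    ← Complex.exp_add]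
  ring_nf

end PsiExp

lemma logDeriv_entireZeta {s : ℂ} (hs : 1 < s.re) :
    logDeriv entireZeta s = 1 / (s - 1) + deriv riemannZeta s / riemannZeta s := by
  have hs₁ : s ≠ 1 := by rintro rfl; simp at hs
  have heq : entireZeta =ᶠ[𝓝 s] fun z ↦ (z - 1) * riemannZeta z := by
    filter_upwards [isOpen_ne.mem_nhds hs₁] with z hz using entireZeta_of_ne_one hz
  have hlog : logDeriv entireZeta s = logDeriv (fun z ↦ (z - 1) * riemannZeta z) s := by
    rw [logDeriv_apply, logDeriv_apply, heq.deriv_eq, heq.eq_of_nhds]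
  rw [hlog, logDeriv_mul (f := fun z ↦ z - 1) s (sub_ne_zero.2 hs₁)
    (riemannZeta_ne_zero_of_one_lt_re hs) (by fun_prop) (differentiableAt_riemannZeta hs₁)]
  simp [logDeriv_apply]

section Remainder

variable {δ u : ℝ} {S : Finset ℂ} {s : ℂ}

/-- The error `ψ((1 + δ)e^u) - ψ(e^u) - δe^u` with the contributions `k(ρ)(e^{ρu} - e^{(ρ-1)u})` of
the zeros in `S` added back, where `k = shortKernel δ`. The subtracted `e^{(ρ-1)u}` is harmless
and makes the transform of each contribution decay quadratically. -/
noncomputable def remainder (δ : ℝ) (S : Finset ℂ) (u : ℝ) : ℂ :=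
  psiExp (u + Real.log (1 + δ)) - psiExp u - δ * causalExp 1 u +
    ∑ ρ ∈ S, zeroMult ρ * shortKernel δ ρ * (causalExp ρ u - causalExp (ρ - 1) u)

/-- The Laplace transform at `s` of the contribution of the zero `ρ` to `remainder`. -/
noncomputable def zeroTerm (δ : ℝ) (ρ s : ℂ) : ℂ :=
  zeroMult ρ * shortKernel δ ρ * (1 / (s - ρ) - 1 / (s - ρ + 1))

/-- The meromorphic continuation of the Laplace transform of `remainder δ S`. -/
noncomputable def remainderTransform (δ : ℝ) (S : Finset ℂ) (s : ℂ) : ℂ :=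
  -(shortKernel δ s * logDeriv entireZeta s) + dslope (shortKernel δ) 1 s +
    ∑ ρ ∈ S, zeroTerm δ ρ s

lemma measurable_remainder (δ : ℝ) (S : Finset ℂ) : Measurable (remainder δ S) := by
  have hshift : Measurable fun u : ℝ ↦ psiExp (u + Real.log (1 + δ)) :=
    measurable_psiExp.comp (by fun_prop)
  exact ((hshift.sub measurable_psiExp).sub ((measurable_causalExp 1).const_mul _)).add
    (Finset.measurable_sum S fun ρ _ ↦
      ((measurable_causalExp ρ).sub (measurable_causalExp (ρ - 1))).const_mul _)

lemma exp_add_log_one_add (hδ : 0 < δ) (u : ℝ) :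
    Real.exp (u + Real.log (1 + δ)) = Real.exp u * (1 + δ) := by
  rw [Real.exp_add, Real.exp_log (by linarith)]

lemma remainder_of_neg (hδ : 0 < δ) (hδ₁ : δ ≤ 1) (hu : u < 0) : remainder δ S u = 0 := by
  have hshift : Real.exp (u + Real.log (1 + δ)) < 2 := by
    rw [exp_add_log_one_add hδ]
    nlinarith [Real.exp_lt_one_iff.2 hu, Real.exp_pos u]
  simp [remainder, psiExp_of_lt hshift, psiExp_of_neg hu, causalExp_of_neg hu]

lemma exists_norm_remainder_le (hS : ∀ ρ ∈ S, IsCriticalZero ρ) (hδ : 0 < δ) (hδ₁ : δ ≤ 1) :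
    ∃ C, ∀ u, 0 ≤ u → ‖remainder δ S u‖ ≤ C * Real.exp u := by
  refine ⟨(Real.log 4 + 4) * 2 + (Real.log 4 + 4) + 1 +
    ∑ ρ ∈ S, ‖zeroMult ρ * shortKernel δ ρ‖ * 2, fun u hu ↦ ?_⟩
  have hshift : ‖psiExp (u + Real.log (1 + δ))‖ ≤ (Real.log 4 + 4) * 2 * Real.exp u := by
    refine (norm_psiExp_le _).trans ?_
    have : 0 ≤ Real.log 4 := Real.log_nonneg (by norm_num)
    rw [exp_add_log_one_add hδ, mul_assoc, mul_comm 2]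
    gcongr
    linarith
  have hmain : ‖(δ : ℂ) * causalExp 1 u‖ ≤ 1 * Real.exp u := by
    rw [norm_mul, Complex.norm_real, Real.norm_of_nonneg hδ.le]
    gcongr
    exact norm_causalExp_le (by simp) hu
  have hzeros : ‖∑ ρ ∈ S, zeroMult ρ * shortKernel δ ρ * (causalExp ρ u - causalExp (ρ - 1) u)‖ ≤
      (∑ ρ ∈ S, ‖zeroMult ρ * shortKernel δ ρ‖ * 2) * Real.exp u := by
    rw [Finset.sum_mul]
    refine norm_sum_le_of_le S fun ρ hρ ↦ ?_
    rw [norm_mul, mul_assoc, two_mul]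
    have hre := (hS ρ hρ).2
    gcongr
    exact (norm_sub_le _ _).trans (add_le_add (norm_causalExp_le (by linarith) hu)
      (norm_causalExp_le (by rw [Complex.sub_re, hre, Complex.one_re]; norm_num) hu))
  calc ‖remainder δ S u‖
      ≤ ‖psiExp (u + Real.log (1 + δ))‖ + ‖psiExp u‖ + ‖(δ : ℂ) * causalExp 1 u‖ +
        ‖∑ ρ ∈ S, zeroMult ρ * shortKernel δ ρ * (causalExp ρ u - causalExp (ρ - 1) u)‖ := by
        refine (norm_add_le _ _).trans (add_le_add_left ((norm_sub_le _ _).trans ?_) _)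
        exact add_le_add_left (norm_sub_le _ _) _
    _ ≤ _ := by linarith [norm_psiExp_le u]

lemma hasLaplace_remainder (hS : ∀ ρ ∈ S, IsCriticalZero ρ) (hδ : 0 < δ) (hs : 1 < s.re) :
    HasLaplace (remainder δ S) s (remainderTransform δ S s) := by
  have hψ := hasLaplace_psiExp hs
  have hzero (ρ : ℂ) (hρ : ρ ∈ S) := (hasLaplace_causalExp (a := ρ) (s := s) (by
    linarith [(hS ρ hρ).2])).sub (hasLaplace_causalExp (a := ρ - 1) (by
    rw [Complex.sub_re, (hS ρ hρ).2, Complex.one_re]; linarith))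
  have hsum := (((hψ.comp_add_right (Real.log (1 + δ))).sub hψ).sub
    ((hasLaplace_causalExp (a := 1) (by simpa using hs)).const_mul δ)).add
    (HasLaplace.sum fun ρ hρ ↦ (hzero ρ hρ).const_mul (zeroMult ρ * shortKernel δ ρ))
  refine ⟨hsum.integrable, hsum.laplace_eq.trans ?_⟩
  have hs₀ : s ≠ 0 := by rintro rfl; norm_num at hs
  have hs₁ : s ≠ 1 := by rintro rfl; norm_num at hs
  have hs₁' : s - 1 ≠ 0 := sub_ne_zero.2 hs₁
  have hexp : Complex.exp (Real.log (1 + δ) * s) = s * shortKernel δ s + 1 := by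
    rw [mul_shortKernel hs₀, sub_add_cancel]
  simp only [← sub_add, remainderTransform, zeroTerm]
  rw [dslope_shortKernel_of_ne hδ hs₁, logDeriv_entireZeta hs, hexp]
  congr 1
  field_simp
  ring

end Remainder

section CriticalZeros

variable {ρ : ℂ} {t T : ℝ}

/-- The critical zeros of height at most `T`. -/
noncomputable def criticalZerosUpTo (T : ℝ) : Finset ℂ :=
  {ρ ∈ (finite_entireZeta_zeros (1 / 2) T).toFinset | ρ.re = 1 / 2}

lemma mem_criticalZerosUpTo : ρ ∈ criticalZerosUpTo T ↔ IsCriticalZero ρ ∧ |ρ.im| ≤ T := by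
  have hdist (h : ρ.re = 1 / 2) : dist ρ (1 / 2) = |ρ.im| := by
    rw [Complex.dist_of_re_eq (by rw [h]; norm_num), Real.dist_eq]
    norm_num
  simp only [criticalZerosUpTo, Finset.mem_filter, Set.Finite.mem_toFinset, Set.mem_ofPred_eq,
    IsCriticalZero]
  grind

lemma isCriticalZero_of_mem_criticalZerosUpTo (T : ℝ) :
    ∀ ρ ∈ criticalZerosUpTo T, IsCriticalZero ρ :=
  fun _ hρ ↦ (mem_criticalZerosUpTo.1 hρ).1

lemma im_sq_add_re_sq (z : ℂ) : z.im ^ 2 + z.re ^ 2 = ‖z‖ ^ 2 := by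
  rw [← Complex.normSq_eq_norm_sq, Complex.normSq_apply]
  ring

lemma dist_two_add_sq (ρ : ℂ) (t : ℝ) :
    dist ρ (2 + t * I) ^ 2 = (t - ρ.im) ^ 2 + (ρ.re - 2) ^ 2 := by
  rw [dist_eq_norm, ← im_sq_add_re_sq]
  simp
  ring

lemma isCriticalZero_of_mem_zerosNear (hRH : RiemannHypothesis) (hρ : ρ ∈ zerosNear t) :
    IsCriticalZero ρ := by
  obtain ⟨hdist, hzero⟩ := mem_zerosNear.1 hρ
  refine ⟨hzero, re_eq_half_of_entireZeta_eq_zero hRH hzero ?_⟩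
  nlinarith [dist_two_add_sq ρ t, dist_nonneg (x := ρ) (y := 2 + t * I), sq_nonneg (t - ρ.im)]

lemma abs_im_sub_le_of_mem_zerosNear (hRH : RiemannHypothesis) (hρ : ρ ∈ zerosNear t) :
    |ρ.im - t| ≤ 1 := by
  have hdist := (mem_zerosNear.1 hρ).1
  have hsq := dist_two_add_sq ρ t
  rw [(isCriticalZero_of_mem_zerosNear hRH hρ).2] at hsq
  rw [abs_le]
  constructor <;> nlinarith [dist_nonneg (x := ρ) (y := 2 + t * I)]

lemma quarter_le_of_notMem_zerosNear (hρ : IsCriticalZero ρ) (h : ρ ∉ zerosNear t) :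
    1 / 4 ≤ (t - ρ.im) ^ 2 := by
  by_contra! hlt
  refine h (mem_zerosNear_of_abs_le hρ (abs_le_of_sq_le_sq ?_ (by norm_num)))
  linarith

end CriticalZeros

section ZeroTerms

variable {δ η : ℝ} {ρ s : ℂ}

lemma sub_ne_zero_of_re_eq_half (hs : 1 / 2 < s.re) (hρ : ρ.re = 1 / 2) : s - ρ ≠ 0 := fun h ↦ by
  rw [sub_eq_zero.1 h, hρ] at hs
  exact lt_irrefl _ hs

lemma one_le_norm_sub_add_one (hs : 1 / 2 < s.re) (hρ : ρ.re = 1 / 2) : 1 ≤ ‖s - ρ + 1‖ := by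
  refine le_trans ?_ (Complex.re_le_norm _)
  rw [Complex.add_re, Complex.sub_re, Complex.one_re]
  linarith

lemma sub_add_one_ne_zero_of_re_eq_half (hs : 1 / 2 < s.re) (hρ : ρ.re = 1 / 2) :
    s - ρ + 1 ≠ 0 :=
  norm_pos_iff.1 (one_pos.trans_le (one_le_norm_sub_add_one hs hρ))

lemma re_mem_Icc_of_re_eq_half (hρ : ρ.re = 1 / 2) : ρ.re ∈ Set.Icc (1 / 2) 2 := by
  rw [hρ]; norm_num

lemma norm_zeroTerm_sub_le (hδ : 0 < δ) (hδ₁ : δ ≤ 1) (hs : s.re ∈ Set.Ioc (1 / 2) 2)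
    (hρ : ρ.re = 1 / 2) (hnear : |ρ.im - s.im| ≤ 1) :
    ‖zeroTerm δ ρ s - shortKernel δ s * (zeroMult ρ / (s - ρ))‖ ≤
      zeroMult ρ * (42 * weight δ s.im) := by
  have hne := sub_ne_zero_of_re_eq_half hs.1 hρ
  have hne' := sub_add_one_ne_zero_of_re_eq_half hs.1 hρ
  have hsplit : zeroTerm δ ρ s - shortKernel δ s * (zeroMult ρ / (s - ρ)) =
      zeroMult ρ * (-((shortKernel δ s - shortKernel δ ρ) / (s - ρ)) -
        shortKernel δ ρ / (s - ρ + 1)) := by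
    rw [zeroTerm]
    field_simp
    ring
  have hdiff : ‖shortKernel δ s - shortKernel δ ρ‖ / ‖s - ρ‖ ≤ 24 * weight δ s.im := by
    rw [div_le_iff₀ (norm_pos_iff.2 hne)]
    exact norm_shortKernel_sub_le hδ hδ₁ (Set.Ioc_subset_Icc_self hs)
      (re_mem_Icc_of_re_eq_half hρ)
  have hshift : ‖shortKernel δ ρ‖ / ‖s - ρ + 1‖ ≤ 18 * weight δ s.im := by
    refine (div_le_self (norm_nonneg _) (one_le_norm_sub_add_one hs.1 hρ)).trans ?_
    linarith [norm_shortKernel_le_weight hδ hδ₁ (re_mem_Icc_of_re_eq_half hρ),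
      weight_le_two_mul hδ hδ₁ hnear]
  rw [hsplit, norm_mul, Complex.norm_natCast]
  gcongr
  refine (norm_sub_le _ _).trans ?_
  rw [norm_neg, norm_div, norm_div]
  linarith

lemma one_add_sq_div_three_le (hs : 1 / 2 < s.re) (hρ : ρ.re = 1 / 2)
    (hfar : 1 / 4 ≤ (s.im - ρ.im) ^ 2) :
    (1 + (s.im - ρ.im) ^ 2) / 3 ≤ ‖s - ρ‖ * ‖s - ρ + 1‖ := by
  have hnorm : (1 + (s.im - ρ.im) ^ 2) / 5 ≤ ‖s - ρ‖ ^ 2 := by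
    rw [← im_sq_add_re_sq, Complex.sub_im]
    nlinarith [sq_nonneg (s - ρ).re]
  have hnorm' : 1 + (s.im - ρ.im) ^ 2 ≤ ‖s - ρ + 1‖ ^ 2 := by
    rw [← im_sq_add_re_sq, Complex.add_im, Complex.add_re, Complex.sub_im, Complex.sub_re, hρ,
      Complex.one_im, Complex.one_re]
    nlinarith
  refine (pow_le_pow_iff_left₀ (by positivity) (by positivity) two_ne_zero).1 ?_
  calc ((1 + (s.im - ρ.im) ^ 2) / 3) ^ 2
      ≤ (1 + (s.im - ρ.im) ^ 2) / 5 * (1 + (s.im - ρ.im) ^ 2) := by nlinarith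
    _ ≤ ‖s - ρ‖ ^ 2 * ‖s - ρ + 1‖ ^ 2 := by gcongr
    _ = (‖s - ρ‖ * ‖s - ρ + 1‖) ^ 2 := by ring

lemma norm_zeroTerm_le (hδ : 0 < δ) (hδ₁ : δ ≤ 1) (hs : 1 / 2 < s.re) (hρ : ρ.re = 1 / 2)
    (hfar : 1 / 4 ≤ (s.im - ρ.im) ^ 2) :
    ‖zeroTerm δ ρ s‖ ≤ 27 * (zeroMult ρ * (weight δ ρ.im * lorentzian (s.im - ρ.im))) := by
  have hprod := one_add_sq_div_three_le hs hρ hfar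
  have hcombine : zeroTerm δ ρ s =
      zeroMult ρ * (shortKernel δ ρ / ((s - ρ) * (s - ρ + 1))) := by
    have hne := sub_ne_zero_of_re_eq_half hs hρ
    have hne' := sub_add_one_ne_zero_of_re_eq_half hs hρ
    rw [zeroTerm]
    field_simp
    ring
  rw [hcombine, norm_mul, Complex.norm_natCast, mul_left_comm, norm_div, norm_mul]
  gcongr
  rw [div_le_iff₀ (lt_of_lt_of_le (by positivity) hprod)]
  have hweight := weight_pos hδ ρ.im
  have hlor := lorentzian_pos (s.im - ρ.im)
  calc ‖shortKernel δ ρ‖ ≤ 9 * weight δ ρ.im :=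
        norm_shortKernel_le_weight hδ hδ₁ (re_mem_Icc_of_re_eq_half hρ)
    _ = 27 * (weight δ ρ.im * lorentzian (s.im - ρ.im)) * ((1 + (s.im - ρ.im) ^ 2) / 3) := by
        unfold lorentzian; field_simp; ring
    _ ≤ _ := by gcongr

lemma norm_shortKernel_mul_div_le (hδ : 0 < δ) (hδ₁ : δ ≤ 1) (hη : 0 < η)
    (hs : s.re ∈ Set.Icc (1 / 2 + η) 2) (hρ : ρ.re = 1 / 2) :
    ‖shortKernel δ s * (zeroMult ρ / (s - ρ))‖ ≤ zeroMult ρ * (9 * weight δ s.im / η) := by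
  have hdist : η ≤ ‖s - ρ‖ := by
    refine le_trans ?_ (Complex.re_le_norm _)
    rw [Complex.sub_re, hρ]
    linarith [hs.1]
  have hkernel := norm_shortKernel_le_weight hδ hδ₁ (s := s) ⟨by linarith [hs.1], hs.2⟩
  have hweight := weight_pos hδ s.im
  rw [norm_mul, norm_div, Complex.norm_natCast, mul_div_assoc', mul_comm, mul_div_assoc]
  gcongr

end ZeroTerms

section TransformBound

variable {δ η t T : ℝ} {s : ℂ} {S : Finset ℂ}

/-- The majorant `∑ m(ρ) w(γ) / (1 + (t - γ)²)` of the contributions of the zeros `ρ = 1/2 + iγ`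
far from height `t`. -/
noncomputable def lorentzSum (δ : ℝ) (S : Finset ℂ) (t : ℝ) : ℝ :=
  ∑ ρ ∈ S, (zeroMult ρ : ℝ) * (weight δ ρ.im * lorentzian (t - ρ.im))

/-- The majorant of the contributions of the zeros near height `t` but above height `T`, on the
line at distance `η` from the critical line. -/
noncomputable def tailMajorant (δ η T : ℝ) : ℝ → ℝ :=
  {t | T - 1 < |t|}.indicator fun t ↦ 729 / η * (weight δ t * logHeight t)

lemma sum_zeroMult_mul_le_of_subset (hS : S ⊆ zerosNear t) {c : ℝ} (hc : 0 ≤ c) :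
    ∑ ρ ∈ S, zeroMult ρ * c ≤ 81 * logHeight t * c := by
  rw [← Finset.sum_mul]
  gcongr
  exact (Finset.sum_le_sum_of_subset_of_nonneg hS fun _ _ _ ↦ by positivity).trans
    (sum_zeroMult_zerosNear_le t)

lemma norm_sum_near_le (hRH : RiemannHypothesis) (hδ : 0 < δ) (hδ₁ : δ ≤ 1)
    (hs : s.re ∈ Set.Ioc (1 / 2) 2) :
    ‖∑ ρ ∈ S ∩ zerosNear s.im, (zeroTerm δ ρ s - shortKernel δ s * (zeroMult ρ / (s - ρ)))‖ ≤
      3402 * (weight δ s.im * logHeight s.im) := by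
  have hweight := weight_pos hδ s.im
  calc _ ≤ ∑ ρ ∈ S ∩ zerosNear s.im, (zeroMult ρ : ℝ) * (42 * weight δ s.im) := by
        refine norm_sum_le_of_le _ fun ρ hρ ↦ ?_
        have hρ := Finset.inter_subset_right hρ
        exact norm_zeroTerm_sub_le hδ hδ₁ hs (isCriticalZero_of_mem_zerosNear hRH hρ).2
          (abs_im_sub_le_of_mem_zerosNear hRH hρ)
    _ ≤ 81 * logHeight s.im * (42 * weight δ s.im) :=
        sum_zeroMult_mul_le_of_subset Finset.inter_subset_right (by positivity)
    _ = 3402 * (weight δ s.im * logHeight s.im) := by ring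

lemma norm_sum_far_le (hS : ∀ ρ ∈ S, IsCriticalZero ρ) (hδ : 0 < δ) (hδ₁ : δ ≤ 1)
    (hs : 1 / 2 < s.re) :
    ‖∑ ρ ∈ S \ zerosNear s.im, zeroTerm δ ρ s‖ ≤ 27 * lorentzSum δ S s.im := by
  rw [lorentzSum, Finset.mul_sum]
  refine (norm_sum_le_of_le _ fun ρ hρ ↦ ?_).trans
    (Finset.sum_le_sum_of_subset_of_nonneg Finset.sdiff_subset fun ρ _ _ ↦ ?_)
  · obtain ⟨hρS, hρ⟩ := Finset.mem_sdiff.1 hρ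
    exact norm_zeroTerm_le hδ hδ₁ hs (hS ρ hρS).2 (quarter_le_of_notMem_zerosNear (hS ρ hρS) hρ)
  · have := weight_pos hδ ρ.im
    have := lorentzian_pos (s.im - ρ.im)
    positivity

lemma zerosNear_subset_criticalZerosUpTo (hRH : RiemannHypothesis) (ht : |t| ≤ T - 1) :
    zerosNear t ⊆ criticalZerosUpTo T := fun ρ hρ ↦ by
  refine mem_criticalZerosUpTo.2 ⟨isCriticalZero_of_mem_zerosNear hRH hρ, ?_⟩
  linarith [abs_sub_abs_le_abs_sub ρ.im t, abs_im_sub_le_of_mem_zerosNear hRH hρ]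

lemma norm_sum_tail_le (hRH : RiemannHypothesis) (hδ : 0 < δ) (hδ₁ : δ ≤ 1) (hη : 0 < η)
    (hs : s.re ∈ Set.Icc (1 / 2 + η) 2) :
    ‖∑ ρ ∈ zerosNear s.im \ criticalZerosUpTo T, shortKernel δ s * (zeroMult ρ / (s - ρ))‖ ≤
      tailMajorant δ η T s.im := by
  rcases le_or_gt |s.im| (T - 1) with hT | hT
  · rw [tailMajorant, Set.indicator_of_notMem (by simpa using hT),
      Finset.sdiff_eq_empty_iff_subset.2 (zerosNear_subset_criticalZerosUpTo hRH hT),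
      Finset.sum_empty, norm_zero]
  rw [tailMajorant, Set.indicator_of_mem (by simpa using hT)]
  have hweight := weight_pos hδ s.im
  calc _ ≤ ∑ ρ ∈ zerosNear s.im \ criticalZerosUpTo T, zeroMult ρ * (9 * weight δ s.im / η) :=
        norm_sum_le_of_le _ fun ρ hρ ↦ norm_shortKernel_mul_div_le hδ hδ₁ hη hs
          (isCriticalZero_of_mem_zerosNear hRH (Finset.sdiff_subset hρ)).2
    _ ≤ 81 * logHeight s.im * (9 * weight δ s.im / η) :=
        sum_zeroMult_mul_le_of_subset Finset.sdiff_subset (by positivity)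
    _ = 729 / η * (weight δ s.im * logHeight s.im) := by ring

lemma entireZeta_ne_zero (hRH : RiemannHypothesis) (hs : 1 / 2 < s.re) : entireZeta s ≠ 0 :=
  fun h ↦ hs.ne' (re_eq_half_of_entireZeta_eq_zero hRH h (by linarith))

lemma norm_shortKernel_mul_logDeriv_sub_le (hRH : RiemannHypothesis) (hδ : 0 < δ) (hδ₁ : δ ≤ 1)
    (hs : s.re ∈ Set.Ioc (1 / 2) 2) :
    ‖shortKernel δ s * (logDeriv entireZeta s - ∑ ρ ∈ zerosNear s.im, zeroMult ρ / (s - ρ))‖ ≤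
      3600000 * (weight δ s.im * logHeight s.im) := by
  have hdist : dist s (2 + s.im * I) ≤ 3 / 2 := by
    rw [Complex.dist_of_im_eq (by simp), Real.dist_eq, abs_le]
    simp only [Complex.add_re, Complex.re_ofNat, Complex.re_ofReal_mul, Complex.I_re]
    constructor <;> linarith [hs.1, hs.2]
  rw [norm_mul]
  calc _ ≤ 9 * weight δ s.im * (400000 * logHeight s.im) := by
        have := weight_pos hδ s.im
        gcongr
        · exact norm_shortKernel_le_weight hδ hδ₁ (Set.Ioc_subset_Icc_self hs)
        · exact norm_logDeriv_entireZeta_sub_sum_le hdist (entireZeta_ne_zero hRH hs.1)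
    _ = 3600000 * (weight δ s.im * logHeight s.im) := by ring

/-- The poles of `k(s) ζ′/ζ(s)` at the zeros near height `Im s` cancel against those of the terms
`zeroTerm`, whatever the distance of `s` from the critical line. -/
lemma remainderTransform_eq_near_add_far_sub_tail (δ : ℝ) (S : Finset ℂ) (s : ℂ) :
    remainderTransform δ S s =
      -(shortKernel δ s * (logDeriv entireZeta s - ∑ ρ ∈ zerosNear s.im, zeroMult ρ / (s - ρ))) +
      dslope (shortKernel δ) 1 s +
      ∑ ρ ∈ S ∩ zerosNear s.im, (zeroTerm δ ρ s - shortKernel δ s * (zeroMult ρ / (s - ρ))) +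
      ∑ ρ ∈ S \ zerosNear s.im, zeroTerm δ ρ s -
      ∑ ρ ∈ zerosNear s.im \ S, shortKernel δ s * (zeroMult ρ / (s - ρ)) := by
  rw [remainderTransform, ← Finset.sum_inter_add_sum_sdiff S (zerosNear s.im),
    ← Finset.sum_inter_add_sum_sdiff (zerosNear s.im) S, Finset.inter_comm (zerosNear s.im) S,
    Finset.sum_sub_distrib, ← Finset.mul_sum, ← Finset.mul_sum]
  ring

lemma norm_remainderTransform_le (hRH : RiemannHypothesis) (hδ : 0 < δ) (hδ₁ : δ ≤ 1)
    (hη : 0 < η) (hs : s.re ∈ Set.Icc (1 / 2 + η) 2) :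
    ‖remainderTransform δ (criticalZerosUpTo T) s‖ ≤
      4000000 * (weight δ s.im * logHeight s.im) + 27 * lorentzSum δ (criticalZerosUpTo T) s.im +
        tailMajorant δ η T s.im := by
  have hs' : s.re ∈ Set.Ioc (1 / 2) 2 := ⟨by linarith [hs.1], hs.2⟩
  rw [remainderTransform_eq_near_add_far_sub_tail]
  refine (norm_sub_le _ _).trans (add_le_add ?_ (norm_sum_tail_le hRH hδ hδ₁ hη hs))
  refine (norm_add_le _ _).trans (add_le_add ?_
    (norm_sum_far_le (isCriticalZero_of_mem_criticalZerosUpTo T) hδ hδ₁ hs'.1))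
  refine (norm_add₃_le).trans ?_
  rw [norm_neg]
  linarith [norm_shortKernel_mul_logDeriv_sub_le hRH hδ hδ₁ hs',
    norm_dslope_shortKernel_le hδ hδ₁ (Set.Ioc_subset_Icc_self hs'),
    norm_sum_near_le (S := criticalZerosUpTo T) hRH hδ hδ₁ hs',
    le_mul_of_one_le_right (weight_pos hδ s.im).le (one_le_logHeight s.im), weight_pos hδ s.im]

lemma differentiableAt_remainderTransform (hRH : RiemannHypothesis)
    (hS : ∀ ρ ∈ S, IsCriticalZero ρ) (hs : 1 / 2 < s.re) :
    DifferentiableAt ℂ (remainderTransform δ S) s := by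
  have hs₀ : s ≠ 0 := by rintro rfl; norm_num at hs
  have hderiv : DifferentiableAt ℂ (deriv entireZeta) s :=
    (differentiable_entireZeta.analyticAt s).deriv.differentiableAt
  have hlog : DifferentiableAt ℂ (logDeriv entireZeta) s :=
    hderiv.div (differentiable_entireZeta s) (entireZeta_ne_zero hRH hs)
  refine (((differentiableAt_shortKernel hs₀).mul hlog).neg.add
    (differentiableAt_dslope_shortKernel (by linarith))).add (.fun_sum fun ρ hρ ↦ ?_)
  refine DifferentiableAt.const_mul (.sub ?_ ?_) _
  · exact .div (by fun_prop) (by fun_prop) (sub_ne_zero_of_re_eq_half hs (hS ρ hρ).2)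
  · exact .div (by fun_prop) (by fun_prop) (sub_add_one_ne_zero_of_re_eq_half hs (hS ρ hρ).2)

end TransformBound

section L2Bound

variable {δ η T : ℝ} {S : Finset ℂ}

/-- The majorant of `lorentzSum δ S t ^ 2 / (972 * logMoment)` given by Cauchy–Schwarz. -/
noncomputable def lorentzSqSum (δ : ℝ) (S : Finset ℂ) (t : ℝ) : ℝ :=
  ∑ ρ ∈ S, zeroMult ρ * weight δ ρ.im ^ 2 * (lorentzian (t - ρ.im) * logHeight t)

lemma lorentzSum_sq_le (hS : ∀ ρ ∈ S, IsCriticalZero ρ) (δ t : ℝ) :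
    lorentzSum δ S t ^ 2 ≤ 972 * logMoment * lorentzSqSum δ S t := by
  have hlor (ρ : ℂ) := (lorentzian_pos (t - ρ.im)).le
  have hweighted (ρ : ℂ) : 0 ≤ zeroMult ρ * weight δ ρ.im ^ 2 * lorentzian (t - ρ.im) :=
    mul_nonneg (by positivity) (hlor ρ)
  calc lorentzSum δ S t ^ 2
      ≤ (∑ ρ ∈ S, zeroMult ρ * lorentzian (t - ρ.im)) *
        ∑ ρ ∈ S, zeroMult ρ * weight δ ρ.im ^ 2 * lorentzian (t - ρ.im) :=
        Finset.sum_sq_le_sum_mul_sum_of_sq_le_mul S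
          (fun ρ _ ↦ mul_nonneg (Nat.cast_nonneg _) (hlor ρ)) (fun ρ _ ↦ hweighted ρ)
          fun ρ _ ↦ le_of_eq (by ring)
    _ ≤ 972 * logMoment * logHeight t *
        ∑ ρ ∈ S, zeroMult ρ * weight δ ρ.im ^ 2 * lorentzian (t - ρ.im) :=
        mul_le_mul_of_nonneg_right (sum_zeroMult_mul_lorentzian_le hS t)
          (Finset.sum_nonneg fun ρ _ ↦ hweighted ρ)
    _ = 972 * logMoment * lorentzSqSum δ S t := by
        rw [lorentzSqSum, mul_assoc, Finset.mul_sum]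
        congr 1
        exact Finset.sum_congr rfl fun ρ _ ↦ by ring

lemma integrable_lorentzSqSum (δ : ℝ) (S : Finset ℂ) : Integrable (lorentzSqSum δ S) :=
  integrable_finsetSum S fun ρ _ ↦ (integrable_lorentzian_sub_mul_logHeight ρ.im).const_mul _

lemma integral_lorentzSqSum_le (hS : ∀ ρ ∈ S, IsCriticalZero ρ) (hδ : 0 < δ) (hδ₁ : δ ≤ 1) :
    ∫ t, lorentzSqSum δ S t ≤ 10368 * logMoment ^ 2 * (δ * Real.log (2 / δ) ^ 2) := by
  have hmoment := logMoment_nonneg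
  calc ∫ t, lorentzSqSum δ S t
      = ∑ ρ ∈ S, zeroMult ρ * weight δ ρ.im ^ 2 *
          ∫ t, lorentzian (t - ρ.im) * logHeight t := by
        simp only [lorentzSqSum]
        rw [integral_finsetSum S fun ρ _ ↦
          (integrable_lorentzian_sub_mul_logHeight ρ.im).const_mul _]
        simp only [integral_const_mul]
    _ ≤ ∑ ρ ∈ S, zeroMult ρ * weight δ ρ.im ^ 2 * (4 * logMoment * logHeight ρ.im) := by
        gcongr with ρ
        exact integral_lorentzian_sub_mul_logHeight_le ρ.im
    _ = 4 * logMoment * ∑ ρ ∈ S, zeroMult ρ * (weight δ ρ.im ^ 2 * logHeight ρ.im) := by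
        rw [Finset.mul_sum]
        exact Finset.sum_congr rfl fun ρ _ ↦ by ring
    _ ≤ 4 * logMoment * (2592 * logMoment * (δ * Real.log (2 / δ) ^ 2)) := by
        gcongr
        exact sum_zeroMult_mul_weight_sq_le hS hδ hδ₁
    _ = 10368 * logMoment ^ 2 * (δ * Real.log (2 / δ) ^ 2) := by ring

lemma tendsto_weight_mul_logHeight (hδ : 0 < δ) (hδ₁ : δ ≤ 1) :
    Tendsto (fun t ↦ weight δ t * logHeight t) (cocompact ℝ) (𝓝 0) := by
  have hlog : Tendsto (fun y : ℝ ↦ 3 * (Real.log y / y)) atTop (𝓝 0) := by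
    simpa using Real.isLittleO_log_id_atTop.tendsto_div_nhds_zero.const_mul 3
  have habs : Tendsto (fun t : ℝ ↦ |t| + 3) (cocompact ℝ) atTop :=
    tendsto_atTop_add_const_right _ _ (tendsto_norm_cocompact_atTop (E := ℝ))
  refine squeeze_zero (fun t ↦ (mul_pos (weight_pos hδ t) (logHeight_pos t)).le) (fun t ↦ ?_)
    (hlog.comp habs)
  calc weight δ t * logHeight t ≤ 3 / (|t| + 3) * logHeight t := by
        refine mul_le_mul_of_nonneg_right ((weight_le_inv hδ hδ₁ t).trans ?_) (logHeight_pos t).le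
        rw [div_le_div_iff₀ (by positivity) (by positivity)]
        linarith [abs_nonneg t]
    _ = 3 * (Real.log (|t| + 3) / (|t| + 3)) := by rw [logHeight]; ring

lemma tendsto_lorentzian_sub (a : ℝ) :
    Tendsto (fun t ↦ lorentzian (t - a)) (cocompact ℝ) (𝓝 0) := by
  have hlor : Tendsto (fun t ↦ lorentzian t) (cocompact ℝ) (𝓝 0) := by
    simp only [lorentzian, one_div]
    refine tendsto_inv_atTop_zero.comp (tendsto_atTop_add_const_left _ _ ?_)
    simpa only [Function.comp_def, Real.norm_eq_abs, sq_abs] using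
      (tendsto_pow_atTop two_ne_zero).comp (tendsto_norm_cocompact_atTop (E := ℝ))
  exact hlor.comp (Homeomorph.subRight a).isClosedEmbedding.tendsto_cocompact

lemma tendsto_lorentzSum (δ : ℝ) (S : Finset ℂ) :
    Tendsto (lorentzSum δ S) (cocompact ℝ) (𝓝 0) := by
  have hterm (ρ : ℂ) (_ : ρ ∈ S) :
      Tendsto (fun t ↦ (zeroMult ρ : ℝ) * (weight δ ρ.im * lorentzian (t - ρ.im)))
        (cocompact ℝ) (𝓝 0) := by
    simpa using ((tendsto_lorentzian_sub ρ.im).const_mul (weight δ ρ.im)).const_mul (zeroMult ρ : ℝ)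
  have hsum := tendsto_finsetSum S hterm
  rwa [Finset.sum_const_zero] at hsum

lemma tailMajorant_le (hδ : 0 < δ) (hη : 0 < η) (T t : ℝ) :
    tailMajorant δ η T t ≤ 729 / η * (weight δ t * logHeight t) := by
  have := weight_pos hδ t
  have := logHeight_pos t
  exact Set.indicator_apply_le' (fun _ ↦ le_rfl) fun _ ↦ by positivity

lemma tailMajorant_nonneg (hδ : 0 < δ) (hη : 0 < η) (T t : ℝ) : 0 ≤ tailMajorant δ η T t := by
  refine Set.indicator_nonneg (fun x _ ↦ ?_) t
  have := weight_pos hδ x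
  have := logHeight_pos x
  positivity

lemma measurable_tailMajorant (hδ : 0 < δ) (η T : ℝ) : Measurable (tailMajorant δ η T) :=
  (((continuous_weight hδ).mul continuous_logHeight).const_mul _).measurable.indicator
    (measurableSet_lt measurable_const (by fun_prop))

lemma tailMajorant_sq_le (hδ : 0 < δ) (hη : 0 < η) (T t : ℝ) :
    ‖tailMajorant δ η T t ^ 2‖ ≤ (729 / η) ^ 2 * (weight δ t ^ 2 * logHeight t ^ 2) := by
  rw [Real.norm_of_nonneg (sq_nonneg _), ← mul_pow, ← mul_pow]
  exact pow_le_pow_left₀ (tailMajorant_nonneg hδ hη T t) (tailMajorant_le hδ hη T t) 2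

lemma integrable_tailMajorant_sq (hδ : 0 < δ) (hδ₁ : δ ≤ 1) (hη : 0 < η) (T : ℝ) :
    Integrable fun t ↦ tailMajorant δ η T t ^ 2 :=
  ((integrable_weight_sq_mul_logHeight_sq hδ hδ₁).const_mul ((729 / η) ^ 2)).mono'
    ((measurable_tailMajorant hδ η T).pow_const 2).aestronglyMeasurable
    (ae_of_all _ (tailMajorant_sq_le hδ hη T))

lemma tendsto_integral_tailMajorant_sq (hδ : 0 < δ) (hδ₁ : δ ≤ 1) (hη : 0 < η) :
    Tendsto (fun T ↦ ∫ t, tailMajorant δ η T t ^ 2) atTop (𝓝 0) := by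
  have hlim := tendsto_integral_filter_of_dominated_convergence (l := atTop)
    (F := fun T t ↦ tailMajorant δ η T t ^ 2) (f := fun _ ↦ (0 : ℝ)) _
    (Eventually.of_forall fun T ↦
      ((measurable_tailMajorant hδ η T).pow_const 2).aestronglyMeasurable)
    (Eventually.of_forall fun T ↦ ae_of_all _ (tailMajorant_sq_le hδ hη T))
    ((integrable_weight_sq_mul_logHeight_sq hδ hδ₁).const_mul ((729 / η) ^ 2))
    (ae_of_all _ fun t ↦ tendsto_const_nhds.congr' ?_)
  · simpa only [integral_zero] using hlim
  · filter_upwards [eventually_ge_atTop (|t| + 1)] with T hT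
    rw [tailMajorant, Set.indicator_of_notMem (by simp; linarith), zero_pow two_ne_zero]

/-- The majorant of `‖remainderTransform‖ ^ 2` on the line `Re s = 1 / 2 + η`. -/
noncomputable def sqMajorant (δ η T t : ℝ) : ℝ :=
  3 * (16000000000000 * (weight δ t ^ 2 * logHeight t ^ 2) +
    729 * (972 * logMoment * lorentzSqSum δ (criticalZerosUpTo T) t) + tailMajorant δ η T t ^ 2)

/-- The constant of the mean square bound for `remainder`. -/
noncomputable def remainderConst : ℝ :=
  3 * (16000000000000 * (4 * logMoment) + 729 * (972 * logMoment * (10368 * logMoment ^ 2)) + 1)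

lemma norm_remainderTransform_line_sq_le (hRH : RiemannHypothesis) (hδ : 0 < δ) (hδ₁ : δ ≤ 1)
    (hη : 0 < η) (hη₁ : η ≤ 1 / 2) (T t : ℝ) :
    ‖remainderTransform δ (criticalZerosUpTo T) ((1 / 2 + η : ℝ) + t * I)‖ ^ 2 ≤
      sqMajorant δ η T t := by
  have hbound := norm_remainderTransform_le (s := (1 / 2 + η : ℝ) + t * I) (T := T) hRH hδ hδ₁ hη
    (by simp; linarith)
  rw [show ((1 / 2 + η : ℝ) + t * I : ℂ).im = t by simp] at hbound
  have hsq (a b c : ℝ) : (a + b + c) ^ 2 ≤ 3 * (a ^ 2 + b ^ 2 + c ^ 2) := by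
    nlinarith [sq_nonneg (a - b), sq_nonneg (b - c), sq_nonneg (a - c)]
  refine ((pow_le_pow_left₀ (norm_nonneg _) hbound 2).trans (hsq _ _ _)).trans ?_
  rw [sqMajorant, mul_pow, mul_pow _ (lorentzSum _ _ _), mul_pow (weight δ t)]
  norm_num only
  linarith [lorentzSum_sq_le (isCriticalZero_of_mem_criticalZerosUpTo T) δ t]

lemma integrable_sqMajorant (hδ : 0 < δ) (hδ₁ : δ ≤ 1) (hη : 0 < η) (T : ℝ) :
    Integrable (sqMajorant δ η T) :=
  ((((integrable_weight_sq_mul_logHeight_sq hδ hδ₁).const_mul _).add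
    (((integrable_lorentzSqSum δ _).const_mul _).const_mul _)).add
    (integrable_tailMajorant_sq hδ hδ₁ hη T)).const_mul 3

lemma integral_sqMajorant_le (hδ : 0 < δ) (hδ₁ : δ ≤ 1) (hη : 0 < η)
    (hT : ∫ t, tailMajorant δ η T t ^ 2 ≤ δ * Real.log (2 / δ) ^ 2) :
    ∫ t, sqMajorant δ η T t ≤ remainderConst * (δ * Real.log (2 / δ) ^ 2) := by
  have hmain : Integrable fun t ↦ 16000000000000 * (weight δ t ^ 2 * logHeight t ^ 2) :=
    (integrable_weight_sq_mul_logHeight_sq hδ hδ₁).const_mul _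
  have hzeros : Integrable fun t ↦
      729 * (972 * logMoment * lorentzSqSum δ (criticalZerosUpTo T) t) :=
    ((integrable_lorentzSqSum δ _).const_mul _).const_mul _
  have hsum : Integrable fun t ↦ 16000000000000 * (weight δ t ^ 2 * logHeight t ^ 2) +
      729 * (972 * logMoment * lorentzSqSum δ (criticalZerosUpTo T) t) := hmain.add hzeros
  simp only [sqMajorant]
  rw [integral_const_mul, integral_add hsum (integrable_tailMajorant_sq hδ hδ₁ hη T),
    integral_add hmain hzeros, integral_const_mul, integral_const_mul, integral_const_mul,
    remainderConst]
  linarith [integral_weight_sq_mul_logHeight_sq_le hδ hδ₁,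
    mul_le_mul_of_nonneg_left
      (integral_lorentzSqSum_le (isCriticalZero_of_mem_criticalZerosUpTo T) hδ hδ₁)
      (mul_nonneg (by norm_num : (0 : ℝ) ≤ 972) logMoment_nonneg)]

lemma continuous_remainderTransform_line (hRH : RiemannHypothesis)
    (hS : ∀ ρ ∈ S, IsCriticalZero ρ) (hη : 0 < η) :
    Continuous fun t : ℝ ↦ remainderTransform δ S ((1 / 2 + η : ℝ) + t * I) :=
  continuous_iff_continuousAt.2 fun t ↦
    ContinuousAt.comp (f := fun t : ℝ ↦ ((1 / 2 + η : ℝ) : ℂ) + t * I)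
      (differentiableAt_remainderTransform hRH hS (by simpa using hη)).continuousAt (by fun_prop)

lemma integrable_remainderTransform_line_sq (hRH : RiemannHypothesis) (hδ : 0 < δ) (hδ₁ : δ ≤ 1)
    (hη : 0 < η) (hη₁ : η ≤ 1 / 2) (T : ℝ) : Integrable fun t : ℝ ↦
      ‖remainderTransform δ (criticalZerosUpTo T) ((1 / 2 + η : ℝ) + t * I)‖ ^ 2 := by
  have hcont := continuous_remainderTransform_line (δ := δ) hRH
    (isCriticalZero_of_mem_criticalZerosUpTo T) hη
  refine (integrable_sqMajorant hδ hδ₁ hη T).mono' (hcont.norm.pow 2).aestronglyMeasurable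
    (ae_of_all _ fun t ↦ ?_)
  rw [Real.norm_of_nonneg (by positivity)]
  exact norm_remainderTransform_line_sq_le hRH hδ hδ₁ hη hη₁ T t

lemma tendsto_stripMajorant (hδ : 0 < δ) (hδ₁ : δ ≤ 1) (S : Finset ℂ) (η : ℝ) :
    Tendsto (fun t ↦ 4000000 * (weight δ t * logHeight t) + 27 * lorentzSum δ S t +
      729 / η * (weight δ t * logHeight t)) (cocompact ℝ) (𝓝 0) := by
  have hweight := tendsto_weight_mul_logHeight hδ hδ₁
  simpa using ((hweight.const_mul 4000000).add ((tendsto_lorentzSum δ S).const_mul 27)).add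
    (hweight.const_mul (729 / η))

theorem exists_integral_remainder_sq_le (hRH : RiemannHypothesis) (hδ : 0 < δ) (hδ₁ : δ ≤ 1)
    (hη : 0 < η) (hη₁ : η ≤ 1 / 2) :
    ∃ S : Finset ℂ, (∀ ρ ∈ S, IsCriticalZero ρ) ∧ ∀ V, 0 ≤ V →
      ∫ u in (0 : ℝ)..V, ‖remainder δ S u‖ ^ 2 * Real.exp (-2 * (1 / 2 + η) * u) ≤
        remainderConst * (δ * Real.log (2 / δ) ^ 2) := by
  have hlog : 0 < Real.log (2 / δ) := Real.log_pos (by rw [lt_div_iff₀ hδ]; linarith)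
  obtain ⟨T, hT⟩ := ((tendsto_integral_tailMajorant_sq hδ hδ₁ hη).eventually
    (gt_mem_nhds (by positivity : 0 < δ * Real.log (2 / δ) ^ 2))).exists
  have hS := isCriticalZero_of_mem_criticalZerosUpTo T
  obtain ⟨C, hC⟩ := exists_norm_remainder_le hS hδ hδ₁
  refine ⟨criticalZerosUpTo T, hS, fun V hV ↦ ?_⟩
  have hplancherel := integral_sq_norm_le_of_laplace_continuation (σ₀ := 1 / 2 + η) (σ₁ := 2)
    (c := 1) (C := C) (E := remainderTransform δ (criticalZerosUpTo T))
    (measurable_remainder δ _) (fun u ↦ remainder_of_neg hδ hδ₁)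
    (by simpa only [one_mul] using hC) (by linarith) (by norm_num)
    (fun s hs ↦ differentiableAt_remainderTransform hRH hS (by linarith [hs.1]))
    (fun t ↦ (hasLaplace_remainder hS hδ (by simp)).laplace_eq.symm)
    (tendsto_stripMajorant hδ hδ₁ (criticalZerosUpTo T) η)
    (fun s hs ↦ (norm_remainderTransform_le hRH hδ hδ₁ hη hs).trans
      (add_le_add_right (tailMajorant_le hδ hη T s.im) _))
    (integrable_remainderTransform_line_sq hRH hδ hδ₁ hη hη₁ T) hV
  have hmono : ∫ t : ℝ, ‖remainderTransform δ (criticalZerosUpTo T) ((1 / 2 + η : ℝ) + t * I)‖ ^ 2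
      ≤ ∫ t, sqMajorant δ η T t :=
    integral_mono (integrable_remainderTransform_line_sq hRH hδ hδ₁ hη hη₁ T)
      (integrable_sqMajorant hδ hδ₁ hη T)
      (norm_remainderTransform_line_sq_le hRH hδ hδ₁ hη hη₁ T)
  have hπ : 1 / (2 * π) ≤ 1 := (div_le_one (by positivity)).2 (by linarith [Real.pi_gt_three])
  exact (hplancherel.trans (mul_le_of_le_one_left (integral_nonneg fun t ↦ by positivity) hπ)).trans
    (hmono.trans (integral_sqMajorant_le hδ hδ₁ hη hT.le))

end L2Bound

section TrigSum

variable {b : ℝ}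

/-- The exponentially damped wave `e^{iav} e^{-b|v|}`. -/
noncomputable def dampedWave (a b v : ℝ) : ℂ := Complex.exp (a * v * I) * (Real.exp (-b * |v|) : ℝ)

lemma dampedWave_eqOn_Iic (a b : ℝ) :
    Set.EqOn (dampedWave a b) (fun v : ℝ ↦ Complex.exp ((b + a * I) * v)) (Set.Iic 0) := by
  intro v hv
  dsimp only [dampedWave]
  rw [abs_of_nonpos hv, Complex.ofReal_exp, ← Complex.exp_add]
  push_cast
  ring_nf

lemma dampedWave_eqOn_Ioi (a b : ℝ) :
    Set.EqOn (dampedWave a b) (fun v : ℝ ↦ Complex.exp ((-b + a * I) * v)) (Set.Ioi 0) := by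
  intro v hv
  dsimp only [dampedWave]
  rw [abs_of_pos hv, Complex.ofReal_exp, ← Complex.exp_add]
  push_cast
  ring_nf

lemma integrableOn_dampedWave_Iic (a : ℝ) (hb : 0 < b) :
    IntegrableOn (dampedWave a b) (Set.Iic 0) :=
  (integrableOn_exp_mul_complex_Iic (by simpa using hb) 0).congr_fun
    (dampedWave_eqOn_Iic a b).symm measurableSet_Iic

lemma integrableOn_dampedWave_Ioi (a : ℝ) (hb : 0 < b) :
    IntegrableOn (dampedWave a b) (Set.Ioi 0) :=
  (integrableOn_exp_mul_complex_Ioi (by simpa using hb) 0).congr_fun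
    (dampedWave_eqOn_Ioi a b).symm measurableSet_Ioi

lemma integrable_dampedWave (a : ℝ) (hb : 0 < b) : Integrable (dampedWave a b) := by
  rw [← integrableOn_univ, ← Set.Iic_union_Ioi (a := (0 : ℝ))]
  exact (integrableOn_dampedWave_Iic a hb).union (integrableOn_dampedWave_Ioi a hb)

lemma integral_dampedWave (a : ℝ) (hb : 0 < b) :
    ∫ v, dampedWave a b v = (2 * b / (b ^ 2 + a ^ 2) : ℝ) := by
  have hpos : (b + a * I : ℂ) ≠ 0 := fun h ↦ hb.ne' (by simpa using congrArg Complex.re h)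
  have hneg : (-b + a * I : ℂ) ≠ 0 := fun h ↦ hb.ne' (by simpa using congrArg Complex.re h)
  have hsq : (b ^ 2 + a ^ 2 : ℂ) ≠ 0 := by exact_mod_cast (by positivity : b ^ 2 + a ^ 2 ≠ 0)
  rw [← intervalIntegral.integral_Iic_add_Ioi (integrableOn_dampedWave_Iic a hb)
      (integrableOn_dampedWave_Ioi a hb),
    setIntegral_congr_fun measurableSet_Iic (dampedWave_eqOn_Iic a b),
    setIntegral_congr_fun measurableSet_Ioi (dampedWave_eqOn_Ioi a b),
    integral_exp_mul_complex_Iic (by simpa using hb),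
    integral_exp_mul_complex_Ioi (by simpa using hb)]
  push_cast
  simp only [mul_zero, Complex.exp_zero]
  field_simp
  linear_combination (-2 * b * a ^ 2 : ℂ) * Complex.I_sq

variable {ι : Type*}

/-- The finite trigonometric sum `∑ cⱼ e^{i θⱼ v}`. -/
noncomputable def trigSum (s : Finset ι) (c : ι → ℂ) (θ : ι → ℝ) (v : ℝ) : ℂ :=
  ∑ j ∈ s, c j * Complex.exp (θ j * v * I)

lemma trigSum_add (s : Finset ι) (c : ι → ℂ) (θ : ι → ℝ) (v w : ℝ) :
    trigSum s c θ (v + w) = trigSum s (fun j ↦ c j * Complex.exp (θ j * w * I)) θ v := by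
  refine Finset.sum_congr rfl fun j _ ↦ ?_
  dsimp only
  rw [mul_assoc (c j), ← Complex.exp_add]
  push_cast
  ring_nf

lemma ofReal_norm_trigSum_sq (s : Finset ι) (c : ι → ℂ) (θ : ι → ℝ) (v : ℝ) :
    ((‖trigSum s c θ v‖ ^ 2 : ℝ) : ℂ) =
      ∑ j ∈ s, ∑ k ∈ s, c j * conj (c k) * Complex.exp ((θ j - θ k : ℝ) * v * I) := by
  rw [← Complex.normSq_eq_norm_sq, ← Complex.mul_conj, trigSum, map_sum, Finset.sum_mul_sum]
  refine Finset.sum_congr rfl fun j _ ↦ Finset.sum_congr rfl fun k _ ↦ ?_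
  rw [map_mul, ← Complex.exp_conj, mul_mul_mul_comm, ← Complex.exp_add]
  simp only [map_mul, Complex.conj_ofReal, Complex.conj_I]
  push_cast
  ring_nf

lemma ofReal_norm_trigSum_sq_mul_exp (s : Finset ι) (c : ι → ℂ) (θ : ι → ℝ) (b v : ℝ) :
    ((‖trigSum s c θ v‖ ^ 2 * Real.exp (-b * |v|) : ℝ) : ℂ) =
      ∑ j ∈ s, ∑ k ∈ s, c j * conj (c k) * dampedWave (θ j - θ k) b v := by
  rw [Complex.ofReal_mul, ofReal_norm_trigSum_sq, Finset.sum_mul]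
  simp only [Finset.sum_mul, dampedWave, mul_assoc]

lemma integrable_norm_trigSum_sq_mul_exp (s : Finset ι) (c : ι → ℂ) (θ : ι → ℝ) (hb : 0 < b) :
    Integrable fun v ↦ ‖trigSum s c θ v‖ ^ 2 * Real.exp (-b * |v|) := by
  have hcomplex : Integrable fun v : ℝ ↦
      ((‖trigSum s c θ v‖ ^ 2 * Real.exp (-b * |v|) : ℝ) : ℂ) := by
    simp only [ofReal_norm_trigSum_sq_mul_exp]
    exact integrable_finsetSum s fun j _ ↦ integrable_finsetSum s fun k _ ↦
      (integrable_dampedWave _ hb).const_mul _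
  exact hcomplex.re

lemma integral_norm_trigSum_sq_mul_exp_le (s : Finset ι) (c : ι → ℂ) (θ : ι → ℝ) (hb : 0 < b) :
    ∫ v, ‖trigSum s c θ v‖ ^ 2 * Real.exp (-b * |v|) ≤
      ∑ j ∈ s, ∑ k ∈ s, ‖c j‖ * ‖c k‖ * (2 * b / (b ^ 2 + (θ j - θ k) ^ 2)) := by
  have hint (j k : ι) : Integrable fun v ↦ c j * conj (c k) * dampedWave (θ j - θ k) b v :=
    (integrable_dampedWave _ hb).const_mul _
  refine (Real.le_norm_self _).trans ?_
  rw [← Complex.norm_real, ← integral_complex_ofReal]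
  simp only [ofReal_norm_trigSum_sq_mul_exp]
  rw [integral_finsetSum s fun j _ ↦ integrable_finsetSum s fun k _ ↦ hint j k]
  refine norm_sum_le_of_le s fun j _ ↦ ?_
  rw [integral_finsetSum s fun k _ ↦ hint j k]
  refine norm_sum_le_of_le s fun k _ ↦ ?_
  rw [integral_const_mul, integral_dampedWave _ hb, norm_mul, norm_mul, RCLike.norm_conj,
    Complex.norm_real, Real.norm_of_nonneg (by positivity)]

end TrigSum

section ZeroSum

variable {δ u L : ℝ} {S : Finset ℂ} {c : ℂ → ℂ}

lemma sum_sum_zeroMult_mul_lorentzian_le (hS : ∀ ρ ∈ S, IsCriticalZero ρ) (hδ : 0 < δ)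
    (hδ₁ : δ ≤ 1) :
    ∑ ρ ∈ S, ∑ ρ' ∈ S, zeroMult ρ * weight δ ρ.im ^ 2 *
      (zeroMult ρ' * lorentzian (ρ.im - ρ'.im)) ≤
        2519424 * logMoment ^ 2 * (δ * Real.log (2 / δ) ^ 2) := by
  have hmoment := logMoment_nonneg
  calc ∑ ρ ∈ S, ∑ ρ' ∈ S, zeroMult ρ * weight δ ρ.im ^ 2 *
        (zeroMult ρ' * lorentzian (ρ.im - ρ'.im))
      ≤ ∑ ρ ∈ S, zeroMult ρ * weight δ ρ.im ^ 2 * (972 * logMoment * logHeight ρ.im) := by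
        simp only [← Finset.mul_sum]
        gcongr with ρ
        exact sum_zeroMult_mul_lorentzian_le hS ρ.im
    _ = 972 * logMoment * ∑ ρ ∈ S, zeroMult ρ * (weight δ ρ.im ^ 2 * logHeight ρ.im) := by
        rw [Finset.mul_sum]
        exact Finset.sum_congr rfl fun ρ _ ↦ by ring
    _ ≤ 972 * logMoment * (2592 * logMoment * (δ * Real.log (2 / δ) ^ 2)) := by
        gcongr
        exact sum_zeroMult_mul_weight_sq_le hS hδ hδ₁
    _ = 2519424 * logMoment ^ 2 * (δ * Real.log (2 / δ) ^ 2) := by ring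

lemma norm_mul_norm_mul_le (hδ : 0 < δ) (hc : ∀ ρ ∈ S, ‖c ρ‖ ≤ zeroMult ρ * (9 * weight δ ρ.im))
    {ρ ρ' : ℂ} (hρ : ρ ∈ S) (hρ' : ρ' ∈ S) :
    ‖c ρ‖ * ‖c ρ'‖ * (2 * 2 / (2 ^ 2 + (ρ.im - ρ'.im) ^ 2)) ≤
      162 * (zeroMult ρ * weight δ ρ.im ^ 2 * (zeroMult ρ' * lorentzian (ρ.im - ρ'.im))) +
      162 * (zeroMult ρ' * weight δ ρ'.im ^ 2 * (zeroMult ρ * lorentzian (ρ'.im - ρ.im))) := by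
  have hw := (weight_pos hδ ρ.im).le
  have hw' := (weight_pos hδ ρ'.im).le
  have hlor := (lorentzian_pos (ρ.im - ρ'.im)).le
  have hfrac : 2 * 2 / (2 ^ 2 + (ρ.im - ρ'.im) ^ 2) ≤ 4 * lorentzian (ρ.im - ρ'.im) := by
    rw [lorentzian, mul_one_div]
    gcongr <;> norm_num
  have hsymm : lorentzian (ρ'.im - ρ.im) = lorentzian (ρ.im - ρ'.im) := by
    rw [← lorentzian_neg, neg_sub]
  have hamgm : 2 * (weight δ ρ.im * weight δ ρ'.im) ≤ weight δ ρ.im ^ 2 + weight δ ρ'.im ^ 2 := by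
    linarith [two_mul_le_add_sq (weight δ ρ.im) (weight δ ρ'.im)]
  calc ‖c ρ‖ * ‖c ρ'‖ * (2 * 2 / (2 ^ 2 + (ρ.im - ρ'.im) ^ 2))
      ≤ zeroMult ρ * (9 * weight δ ρ.im) * (zeroMult ρ' * (9 * weight δ ρ'.im)) *
        (4 * lorentzian (ρ.im - ρ'.im)) := by
        gcongr
        exacts [hc ρ hρ, hc ρ' hρ']
    _ = 162 * (zeroMult ρ * zeroMult ρ' * lorentzian (ρ.im - ρ'.im)) *
        (2 * (weight δ ρ.im * weight δ ρ'.im)) := by ring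
    _ ≤ 162 * (zeroMult ρ * zeroMult ρ' * lorentzian (ρ.im - ρ'.im)) *
        (weight δ ρ.im ^ 2 + weight δ ρ'.im ^ 2) := by gcongr
    _ = _ := by rw [hsymm]; ring

lemma integral_norm_trigSum_zeros_sq_le (hS : ∀ ρ ∈ S, IsCriticalZero ρ) (hδ : 0 < δ) (hδ₁ : δ ≤ 1)
    (hc : ∀ ρ ∈ S, ‖c ρ‖ ≤ zeroMult ρ * (9 * weight δ ρ.im)) :
    ∫ v, ‖trigSum S c Complex.im v‖ ^ 2 * Real.exp (-2 * |v|) ≤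
      816293376 * logMoment ^ 2 * (δ * Real.log (2 / δ) ^ 2) := by
  refine (integral_norm_trigSum_sq_mul_exp_le S c Complex.im two_pos).trans ?_
  refine (Finset.sum_le_sum fun ρ hρ ↦ Finset.sum_le_sum fun ρ' hρ' ↦
    norm_mul_norm_mul_le hδ hc hρ hρ').trans ?_
  have hdouble := sum_sum_zeroMult_mul_lorentzian_le hS hδ hδ₁
  have hswap := (Finset.sum_comm (s := S) (t := S) (f := fun ρ ρ' ↦
    zeroMult ρ' * weight δ ρ'.im ^ 2 * (zeroMult ρ * lorentzian (ρ'.im - ρ.im)))).trans_le hdouble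
  calc _ = 162 * (∑ ρ ∈ S, ∑ ρ' ∈ S, zeroMult ρ * weight δ ρ.im ^ 2 *
          (zeroMult ρ' * lorentzian (ρ.im - ρ'.im))) +
        162 * ∑ ρ ∈ S, ∑ ρ' ∈ S, zeroMult ρ' * weight δ ρ'.im ^ 2 *
          (zeroMult ρ * lorentzian (ρ'.im - ρ.im)) := by
        simp only [Finset.sum_add_distrib, Finset.mul_sum]
    _ ≤ _ := by linarith

/-- The contribution of the zeros in `S` that `remainder δ S` adds to the error, for `0 ≤ u`. -/
noncomputable def zeroSum (δ : ℝ) (S : Finset ℂ) (u : ℝ) : ℂ :=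
  ∑ ρ ∈ S, zeroMult ρ * shortKernel δ ρ * (Complex.exp (ρ * u) - Complex.exp ((ρ - 1) * u))

@[fun_prop]
lemma continuous_zeroSum (δ : ℝ) (S : Finset ℂ) : Continuous (zeroSum δ S) := by
  unfold zeroSum
  fun_prop

lemma zeroSum_eq_mul_trigSum (hS : ∀ ρ ∈ S, IsCriticalZero ρ) (δ u : ℝ) :
    zeroSum δ S u = (Real.exp (u / 2) - Real.exp (-(u / 2)) : ℝ) *
      trigSum S (fun ρ ↦ zeroMult ρ * shortKernel δ ρ) Complex.im u := by
  rw [zeroSum, trigSum, Finset.mul_sum]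
  refine Finset.sum_congr rfl fun ρ hρ ↦ ?_
  have hρ_eq : ρ = 1 / 2 + ρ.im * I := by apply Complex.ext <;> simp [(hS ρ hρ).2]
  have hexp : Complex.exp (ρ * u) = Complex.exp (u / 2) * Complex.exp (ρ.im * u * I) := by
    rw [← Complex.exp_add]
    conv_lhs => rw [hρ_eq]
    ring_nf
  have hexp_sub_one :
      Complex.exp ((ρ - 1) * u) = Complex.exp (-(u / 2)) * Complex.exp (ρ.im * u * I) := by
    rw [← Complex.exp_add]
    conv_lhs => rw [hρ_eq]
    ring_nf
  rw [hexp, hexp_sub_one]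
  push_cast
  ring

lemma norm_zeroSum_sq_le (hS : ∀ ρ ∈ S, IsCriticalZero ρ) (δ : ℝ) (hu : 0 ≤ u) :
    ‖zeroSum δ S u‖ ^ 2 ≤ Real.exp u *
      ‖trigSum S (fun ρ ↦ zeroMult ρ * shortKernel δ ρ) Complex.im u‖ ^ 2 := by
  rw [zeroSum_eq_mul_trigSum hS, norm_mul, mul_pow, Complex.norm_real]
  gcongr
  have hnonneg : 0 ≤ Real.exp (u / 2) - Real.exp (-(u / 2)) :=
    sub_nonneg.2 (Real.exp_le_exp.2 (by linarith))
  calc ‖Real.exp (u / 2) - Real.exp (-(u / 2))‖ ^ 2 ≤ Real.exp (u / 2) ^ 2 := by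
        rw [Real.norm_of_nonneg hnonneg]
        gcongr
        linarith [Real.exp_pos (-(u / 2))]
    _ = Real.exp u := by rw [← Real.exp_nat_mul]; push_cast; ring_nf

lemma norm_zeroSum_sq_mul_exp_le (hS : ∀ ρ ∈ S, IsCriticalZero ρ) (δ : ℝ) (hu : u ∈ Set.Icc 0 L) :
    ‖zeroSum δ S u‖ ^ 2 * Real.exp u ≤ Real.exp (2 * L) *
      (‖trigSum S (fun ρ ↦ zeroMult ρ * shortKernel δ ρ) Complex.im u‖ ^ 2 *
        Real.exp (-2 * |u - L|)) := by
  have hexp : Real.exp u * Real.exp u = Real.exp (2 * L) * Real.exp (-2 * |u - L|) := by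
    rw [abs_of_nonpos (by linarith [hu.2]), ← Real.exp_add, ← Real.exp_add]
    ring_nf
  calc ‖zeroSum δ S u‖ ^ 2 * Real.exp u
      ≤ Real.exp u * ‖trigSum S (fun ρ ↦ zeroMult ρ * shortKernel δ ρ) Complex.im u‖ ^ 2 *
        Real.exp u := by
        gcongr
        exact norm_zeroSum_sq_le hS δ hu.1
    _ = _ := by rw [mul_right_comm, hexp]; ring

lemma integral_norm_zeroSum_sq_mul_exp_le (hS : ∀ ρ ∈ S, IsCriticalZero ρ) (hδ : 0 < δ)
    (hδ₁ : δ ≤ 1) (hL : 0 ≤ L) :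
    ∫ u in (0 : ℝ)..L, ‖zeroSum δ S u‖ ^ 2 * Real.exp u ≤
      Real.exp (2 * L) * (816293376 * logMoment ^ 2 * (δ * Real.log (2 / δ) ^ 2)) := by
  set c : ℂ → ℂ := fun ρ ↦ zeroMult ρ * shortKernel δ ρ * Complex.exp (ρ.im * L * I)
  have hc (ρ : ℂ) (hρ : ρ ∈ S) : ‖c ρ‖ ≤ zeroMult ρ * (9 * weight δ ρ.im) := by
    rw [norm_mul, norm_mul, ← Complex.ofReal_mul, Complex.norm_exp_ofReal_mul_I, mul_one,
      Complex.norm_natCast]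
    gcongr
    exact norm_shortKernel_le_weight hδ hδ₁ (by rw [(hS ρ hρ).2]; norm_num)
  set F : ℝ → ℝ := fun v ↦ ‖trigSum S c Complex.im v‖ ^ 2 * Real.exp (-2 * |v|)
  have hF : Integrable fun u ↦ Real.exp (2 * L) * F (u - L) :=
    ((integrable_norm_trigSum_sq_mul_exp S c Complex.im two_pos).comp_sub_right L).const_mul _
  have hcont : Continuous fun u ↦ ‖zeroSum δ S u‖ ^ 2 * Real.exp u := by fun_prop
  calc ∫ u in (0 : ℝ)..L, ‖zeroSum δ S u‖ ^ 2 * Real.exp u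
      ≤ ∫ u in (0 : ℝ)..L, Real.exp (2 * L) * F (u - L) := by
        refine intervalIntegral.integral_mono_on hL (hcont.intervalIntegrable _ _)
          hF.intervalIntegrable fun u hu ↦ (norm_zeroSum_sq_mul_exp_le hS δ hu).trans_eq ?_
        simp only [F, c]
        rw [← trigSum_add, sub_add_cancel]
    _ ≤ ∫ u, Real.exp (2 * L) * F (u - L) := by
        rw [intervalIntegral.integral_of_le hL]
        exact setIntegral_le_integral hF (ae_of_all _ fun u ↦ by positivity)
    _ = Real.exp (2 * L) * ∫ v, F v := by
        rw [integral_const_mul, integral_sub_right_eq_self F L]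
    _ ≤ _ := by
        gcongr
        exact integral_norm_trigSum_zeros_sq_le hS hδ hδ₁ hc

end ZeroSum

section MeanSquare

variable {δ u X : ℝ} {S : Finset ℂ}

lemma psi_error_eq_remainder_sub_zeroSum (S : Finset ℂ) (hδ : 0 < δ) (hu : 0 ≤ u) :
    ((chebyshevPsi (Real.exp u + δ * Real.exp u) - chebyshevPsi (Real.exp u) -
      δ * Real.exp u : ℝ) : ℂ) = remainder δ S u - zeroSum δ S u := by
  have hshift : Real.exp u + δ * Real.exp u = Real.exp (u + Real.log (1 + δ)) := by
    rw [exp_add_log_one_add hδ]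
    ring
  simp only [hshift, chebyshevPsi_eq_psi, remainder, zeroSum, psiExp, causalExp_of_nonneg hu,
    one_mul, add_sub_cancel_right, Complex.ofReal_sub, Complex.ofReal_mul, Complex.ofReal_exp]

lemma psi_error_sq_le (S : Finset ℂ) (hδ : 0 < δ) (hu : 0 ≤ u) :
    (chebyshevPsi (Real.exp u + δ * Real.exp u) - chebyshevPsi (Real.exp u) -
      δ * Real.exp u) ^ 2 ≤ 2 * (‖remainder δ S u‖ ^ 2 + ‖zeroSum δ S u‖ ^ 2) := by
  rw [← sq_abs, ← Real.norm_eq_abs, ← Complex.norm_real,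
    psi_error_eq_remainder_sub_zeroSum S hδ hu]
  exact (pow_le_pow_left₀ (norm_nonneg _) (norm_sub_le _ _) 2).trans add_sq_le

lemma intervalIntegrable_norm_remainder_sq_mul (hS : ∀ ρ ∈ S, IsCriticalZero ρ) (hδ : 0 < δ)
    (hδ₁ : δ ≤ 1) {L : ℝ} (hL : 0 ≤ L) {g : ℝ → ℝ} (hg : Continuous g) :
    IntervalIntegrable (fun u ↦ ‖remainder δ S u‖ ^ 2 * g u) volume 0 L := by
  obtain ⟨C, hC⟩ := exists_norm_remainder_le hS hδ hδ₁
  have hmajorant : Continuous fun u ↦ (C * Real.exp u) ^ 2 * ‖g u‖ := by fun_prop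
  refine (hmajorant.intervalIntegrable 0 L).mono_fun'
    (((measurable_remainder δ S).norm.pow_const 2).mul hg.measurable).aestronglyMeasurable ?_
  filter_upwards [ae_restrict_mem measurableSet_uIoc] with u hu
  rw [Set.uIoc_of_le hL] at hu
  rw [norm_mul, norm_pow, norm_norm]
  gcongr
  exact hC u hu.1.le

lemma integral_one_eq_integral_exp_mul (f : ℝ → ℝ) (hX : 0 < X) :
    ∫ x in (1 : ℝ)..X, f x = ∫ u in (0 : ℝ)..Real.log X, f (Real.exp u) * Real.exp u := by
  have hsubst := intervalIntegral.integral_comp_mul_deriv_of_deriv_nonneg (g := f) (a := 0)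
    (b := Real.log X) Real.continuous_exp.continuousOn (fun u _ ↦ Real.hasDerivAt_exp u)
    fun u _ ↦ (Real.exp_pos u).le
  rw [Real.exp_zero, Real.exp_log hX] at hsubst
  exact hsubst.symm

/-- The choice `η = 1 / (2(1 + log X))` keeps `e^{2ηu}` bounded for `e^u ≤ X`. -/
lemma exp_le_three_mul_sq_mul_exp (hX : 1 ≤ X) (hu : u ≤ Real.log X) :
    Real.exp u ≤
      3 * X ^ 2 * Real.exp (-2 * (1 / 2 + 1 / (2 * (1 + Real.log X))) * u) := by
  set η := 1 / (2 * (1 + Real.log X)) with hη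
  have hlog := Real.log_nonneg hX
  have hηu : 2 * η * u ≤ 1 := by
    rw [hη, show 2 * (1 / (2 * (1 + Real.log X))) * u = u / (1 + Real.log X) by field_simp,
      div_le_one (by linarith)]
    linarith
  have hexpη : Real.exp (2 * η * u) ≤ 3 :=
    (Real.exp_le_exp.2 hηu).trans (by linarith [Real.exp_one_lt_d9])
  have hexp : Real.exp (2 * u) ≤ X ^ 2 := by
    rw [show 2 * u = (2 : ℕ) * u by norm_num, Real.exp_nat_mul]
    gcongr
    exact (Real.le_log_iff_exp_le (by linarith)).1 hu
  calc Real.exp u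
      = Real.exp (2 * η * u) * Real.exp (2 * u) * Real.exp (-2 * (1 / 2 + η) * u) := by
        rw [← Real.exp_add, ← Real.exp_add]
        ring_nf
    _ ≤ 3 * X ^ 2 * Real.exp (-2 * (1 / 2 + η) * u) := by gcongr

theorem exists_integral_norm_remainder_sq_mul_exp_le (hRH : RiemannHypothesis) (hδ : 0 < δ)
    (hδ₁ : δ ≤ 1) (hX : 1 ≤ X) :
    ∃ S : Finset ℂ, (∀ ρ ∈ S, IsCriticalZero ρ) ∧
      ∫ u in (0 : ℝ)..Real.log X, ‖remainder δ S u‖ ^ 2 * Real.exp u ≤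
        3 * X ^ 2 * (remainderConst * (δ * Real.log (2 / δ) ^ 2)) := by
  have hlog := Real.log_nonneg hX
  set η := 1 / (2 * (1 + Real.log X))
  have hη₁ : η ≤ 1 / 2 := one_div_le_one_div_of_le two_pos (by linarith)
  obtain ⟨S, hS, hbound⟩ := exists_integral_remainder_sq_le hRH hδ hδ₁ (by positivity : 0 < η) hη₁
  refine ⟨S, hS, ?_⟩
  calc ∫ u in (0 : ℝ)..Real.log X, ‖remainder δ S u‖ ^ 2 * Real.exp u
      ≤ ∫ u in (0 : ℝ)..Real.log X,
        3 * X ^ 2 * (‖remainder δ S u‖ ^ 2 * Real.exp (-2 * (1 / 2 + η) * u)) := by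
        refine intervalIntegral.integral_mono_on hlog
          (intervalIntegrable_norm_remainder_sq_mul hS hδ hδ₁ hlog Real.continuous_exp)
          ((intervalIntegrable_norm_remainder_sq_mul hS hδ hδ₁ hlog (by fun_prop)).const_mul _)
          fun u hu ↦ ?_
        rw [mul_left_comm]
        gcongr
        exact exp_le_three_mul_sq_mul_exp hX hu.2
    _ ≤ 3 * X ^ 2 * (remainderConst * (δ * Real.log (2 / δ) ^ 2)) := by
        rw [intervalIntegral.integral_const_mul]
        gcongr
        exact hbound _ hlog

theorem integral_psi_error_sq_le (hRH : RiemannHypothesis) (hδ : 0 < δ) (hδ₁ : δ ≤ 1)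
    (hX : 1 ≤ X) :
    ∫ x in (1 : ℝ)..X, (chebyshevPsi (x + δ * x) - chebyshevPsi x - δ * x) ^ 2 ≤
      (6 * remainderConst + 2 * (816293376 * logMoment ^ 2)) * δ * X ^ 2 *
        Real.log (2 / δ) ^ 2 := by
  have hX₀ : 0 < X := by linarith
  have hlog := Real.log_nonneg hX
  obtain ⟨S, hS, hrem⟩ := exists_integral_norm_remainder_sq_mul_exp_le hRH hδ hδ₁ hX
  have hzero := integral_norm_zeroSum_sq_mul_exp_le hS hδ hδ₁ hlog
  rw [show 2 * Real.log X = (2 : ℕ) * Real.log X by norm_num, Real.exp_nat_mul,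
    Real.exp_log hX₀] at hzero
  have hrem_int :=
    intervalIntegrable_norm_remainder_sq_mul hS hδ hδ₁ hlog Real.continuous_exp
  have hzero_cont : Continuous fun u ↦ ‖zeroSum δ S u‖ ^ 2 * Real.exp u := by fun_prop
  have hzero_int := hzero_cont.intervalIntegrable (μ := volume) 0 (Real.log X)
  calc ∫ x in (1 : ℝ)..X, (chebyshevPsi (x + δ * x) - chebyshevPsi x - δ * x) ^ 2
      = ∫ u in (0 : ℝ)..Real.log X, (chebyshevPsi (Real.exp u + δ * Real.exp u) -
          chebyshevPsi (Real.exp u) - δ * Real.exp u) ^ 2 * Real.exp u :=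
        integral_one_eq_integral_exp_mul _ hX₀
    _ ≤ ∫ u in (0 : ℝ)..Real.log X, 2 * (‖remainder δ S u‖ ^ 2 * Real.exp u +
          ‖zeroSum δ S u‖ ^ 2 * Real.exp u) := by
        rw [intervalIntegral.integral_of_le hlog, intervalIntegral.integral_of_le hlog]
        refine integral_mono_of_nonneg (ae_of_all _ fun u ↦ by positivity)
          ((hrem_int.add hzero_int).const_mul 2).1 ?_
        filter_upwards [ae_restrict_mem measurableSet_Ioc] with u hu
        rw [← add_mul, ← mul_assoc]
        gcongr
        exact psi_error_sq_le S hδ hu.1.le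
    _ = 2 * ((∫ u in (0 : ℝ)..Real.log X, ‖remainder δ S u‖ ^ 2 * Real.exp u) +
          ∫ u in (0 : ℝ)..Real.log X, ‖zeroSum δ S u‖ ^ 2 * Real.exp u) := by
        rw [intervalIntegral.integral_const_mul, intervalIntegral.integral_add hrem_int hzero_int]
    _ ≤ _ := by linarith

end MeanSquare

end SaffariVaughan

/-- **Saffari–Vaughan bound.** Assuming RH,
`∫_{1}^{X} (ψ(x+δx) - ψ(x) - δx)² dx ≪ δ X² (log(2/δ))²` for `0 < δ ≤ 1`. -/
theorem saffari_vaughan_delta (hRH : RiemannHypothesis) :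
    ∃ C : ℝ, 0 < C ∧ ∀ X : ℝ, 1 ≤ X → ∀ δ : ℝ, 0 < δ → δ ≤ 1 →
      (∫ x in (1:ℝ)..X, (chebyshevPsi (x + δ * x) - chebyshevPsi x - δ * x) ^ 2)
        ≤ C * δ * X ^ 2 * (Real.log (2 / δ)) ^ 2 := by
  have hmoment := SaffariVaughan.logMoment_nonneg
  refine ⟨6 * SaffariVaughan.remainderConst + 2 * (816293376 * SaffariVaughan.logMoment ^ 2),
    by unfold SaffariVaughan.remainderConst; positivity,
    fun X hX δ hδ hδ₁ ↦ SaffariVaughan.integral_psi_error_sq_le hRH hδ hδ₁ hX⟩
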